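/- arXiv:1111.3095 — 2 statements merged into one kernel-verified Lean document; each statement's English description precedes it below -/
import Mathlib

section
/- Let 0 ≠ f ∈ L²(μ). Then for Lebesgue-almost every α ∈ ℝ, the function f_α = V_α f satisfies f_α(t) ≠ 0 for (μ_α)_s-almost every t ∈ ℝ (for any Borel representative of f_α); that is, the set {α ∈ ℝ : (μ_α)_s({t ∈ ℝ : f_α(t) = 0}) > 0} has Lebesgue measure zero. -/
/-!
Write `F(z) = ∫ (t - z)⁻¹ dμ(t)` and `G(z) = ∫ f(t) (t - z)⁻¹ dμ(t)`. The Aronszajn–Krein formulas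
say that the Cauchy integrals of `μ_α` and of `f_α μ_α` are `F / (1 + α F)` and `G / (1 + α F)`.
By the first one and differentiation of measures, the singular part of `μ_α` lives on the set where
`F` has the boundary value `-1 / α`, and `μ_α` gives no mass to the set where `F` has a real
nonzero boundary value different from `-1 / α`.

Consider the joint measure `Π = dα / (1 + α²) · dμ_α(t)` on pairs `(α, t)` and the function
`v(α, t) = phase(α) f_α(t)` in `L²(Π)`, where the phase `(α - i) / (α + i)` turns the weight
`1 / (1 + α²)` into `(α + i)⁻²`. The Cauchy integral of `v` in the variable `t` equals
`G(z) · ∫ (α + i)⁻² (1 + α F(z))⁻¹ dα` (`RankOneFamily.integral_joint`). The last factor vanishes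
for `z` in the lower half-plane and has no zeros in the upper one. Thus `v` behaves like the
boundary function of a vector-valued Hardy class, and `hardy_uniqueness` shows that if `v` vanishes
over a set `E ⊆ ℝ` of positive length then `G = 0` in the upper half-plane, whence `f = 0`.

This applies to the set `E` of those `t` where `F` has a real boundary value `a ≠ 0` and
`f_{-1/a}(t) = 0`: over `E` only `α = -1 / a` is charged, so `v = 0` there. For `f ≠ 0` the set `E`
therefore has length zero. The `t`-marginal of `Π` is absolutely continuous, because
`∫ Im (F / (1 + α F)) dα = π` (`RankOneFamily.joint_absolutelyContinuous`), so `μ_α(E) = 0` for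
almost every `α`. Finally, almost every zero of `f_α` with respect to the singular part of `μ_α`
lies in `E`.
-/

open MeasureTheory Complex Set

local notation "⟪" x ", " y "⟫" => @inner ℂ _ _ x y

section Auxiliary

open Filter Topology ProbabilityTheory
open scoped ENNReal NNReal ComplexConjugate

/-! ### Cauchy transforms and differentiation of measures -/

/-- The Cauchy (Borel) transform `z ↦ ∫ (t - z)⁻¹ dm(t)` of a measure on the line. -/
noncomputable def cauchyTransform (m : Measure ℝ) (z : ℂ) : ℂ := ∫ t, ((t : ℂ) - z)⁻¹ ∂m

lemma ofReal_sub_ne_zero {z : ℂ} (hz : z.im ≠ 0) (t : ℝ) : (t : ℂ) - z ≠ 0 := by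
  intro h
  apply hz
  have := congrArg Complex.im h
  simpa using this

lemma norm_resolvent_le {z : ℂ} (hz : z.im ≠ 0) (t : ℝ) :
    ‖((t : ℂ) - z)⁻¹‖ ≤ |z.im|⁻¹ := by
  rw [norm_inv]
  apply inv_anti₀ (abs_pos.mpr hz)
  have := Complex.abs_im_le_norm ((t : ℂ) - z)
  simpa using this

lemma measurable_resolvent (z : ℂ) : Measurable fun t : ℝ => ((t : ℂ) - z)⁻¹ := by
  fun_prop

lemma integrable_resolvent (m : Measure ℝ) [IsFiniteMeasure m] {z : ℂ} (hz : z.im ≠ 0) :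
    Integrable (fun t : ℝ => ((t : ℂ) - z)⁻¹) m :=
  Integrable.of_bound (measurable_resolvent z).aestronglyMeasurable |z.im|⁻¹
    (ae_of_all _ (norm_resolvent_le hz))

lemma resolvent_im (z : ℂ) (t : ℝ) :
    (((t : ℂ) - z)⁻¹).im = z.im / normSq ((t : ℂ) - z) := by
  rw [Complex.inv_im]; simp

lemma cauchyTransform_im (m : Measure ℝ) [IsFiniteMeasure m] {z : ℂ} (hz : z.im ≠ 0) :
    (cauchyTransform m z).im = ∫ t : ℝ, z.im / normSq ((t : ℂ) - z) ∂m := by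
  have := integral_im (𝕜 := ℂ) (integrable_resolvent m hz)
  simp only [RCLike.im_to_complex, resolvent_im] at this
  exact this.symm

lemma integrable_poisson (m : Measure ℝ) [IsFiniteMeasure m] {z : ℂ} (hz : z.im ≠ 0) :
    Integrable (fun t : ℝ => z.im / normSq ((t : ℂ) - z)) m := by
  have := (integrable_resolvent m hz).im
  simpa only [RCLike.im_to_complex, resolvent_im] using this

lemma cauchyTransform_conj (m : Measure ℝ) (z : ℂ) :
    cauchyTransform m (conj z) = conj (cauchyTransform m z) := by
  unfold cauchyTransform
  rw [← integral_conj]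
  congr 1; ext t; simp

lemma cauchyTransform_im_pos (m : Measure ℝ) [IsFiniteMeasure m] (hm : m ≠ 0) {z : ℂ}
    (hz : 0 < z.im) : 0 < (cauchyTransform m z).im := by
  rw [cauchyTransform_im m hz.ne']
  rw [integral_pos_iff_support_of_nonneg
    (fun t => div_nonneg hz.le (normSq_nonneg _)) (integrable_poisson m hz.ne')]
  have : Function.support (fun t : ℝ => z.im / normSq ((t : ℂ) - z)) = univ := by
    ext t
    simp only [Function.mem_support, mem_univ, iff_true]
    exact div_ne_zero hz.ne' (normSq_eq_zero.not.mpr (ofReal_sub_ne_zero hz.ne' t))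
  rw [this]
  exact (Measure.measure_univ_pos).mpr hm

lemma cauchyTransform_im_neg (m : Measure ℝ) [IsFiniteMeasure m] (hm : m ≠ 0) {z : ℂ}
    (hz : z.im < 0) : (cauchyTransform m z).im < 0 := by
  have := cauchyTransform_im_pos m hm (z := conj z) (by simpa using hz)
  rw [cauchyTransform_conj] at this
  simpa using this

/-- The Poisson kernel at height `ε` is at least `1 / (2ε)` on the ball of radius `ε`. -/
lemma measure_closedBall_le (m : Measure ℝ) [IsFiniteMeasure m] (x : ℝ) {ε : ℝ} (hε : 0 < ε) :
    m.real (Metric.closedBall x ε) ≤ 2 * ε * (cauchyTransform m (x + ε * I)).im := by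
  have hz : ((x : ℂ) + ε * I).im = ε := by simp
  have hz' : ((x : ℂ) + ε * I).im ≠ 0 := by rw [hz]; exact hε.ne'
  rw [cauchyTransform_im m hz', ← integral_const_mul, ← integral_indicator_one
    Metric.isClosed_closedBall.measurableSet]
  apply integral_mono
  · exact (integrable_const (1 : ℝ)).indicator Metric.isClosed_closedBall.measurableSet
  · exact (integrable_poisson m hz').const_mul _
  intro t
  have hpos : 0 < normSq ((t : ℂ) - (x + ε * I)) := normSq_pos.mpr (ofReal_sub_ne_zero hz' t)
  simp only
  by_cases ht : t ∈ Metric.closedBall x ε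
  · rw [indicator_of_mem ht, hz]
    rw [← mul_div_assoc]
    simp only [Pi.one_apply]
    rw [le_div_iff₀ hpos]
    have : (t - x) ^ 2 ≤ ε ^ 2 := by
      rw [Metric.mem_closedBall, Real.dist_eq] at ht
      exact sq_le_sq' (by linarith [neg_abs_le (t - x)]) ((le_abs_self _).trans ht)
    simp [normSq_apply]
    nlinarith
  · rw [indicator_of_notMem ht, hz]
    positivity

/-- The heights `1 / (n + 1)` at which boundary limits are taken. -/
noncomputable def height (n : ℕ) : ℝ := 1 / ((n : ℝ) + 1)

lemma height_pos (n : ℕ) : 0 < height n := Nat.one_div_pos_of_nat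

lemma tendsto_height : Tendsto height atTop (𝓝[>] 0) :=
  tendsto_nhdsWithin_iff.mpr
    ⟨tendsto_one_div_add_atTop_nhds_zero_nat, Eventually.of_forall height_pos⟩

lemma inv_poisson_le (m : Measure ℝ) [IsFiniteMeasure m] (x : ℝ) {ε : ℝ} (hε : 0 < ε) :
    (ENNReal.ofReal (cauchyTransform m (x + ε * I)).im)⁻¹ ≤
      volume (Metric.closedBall x ε) / m (Metric.closedBall x ε) := by
  have h := measure_closedBall_le m x hε
  rw [ENNReal.le_div_iff_mul_le (Or.inr (by simpa using hε)) (Or.inl (measure_ne_top _ _)), mul_comm,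
    ← div_eq_mul_inv]
  apply ENNReal.div_le_of_le_mul
  rw [Real.volume_closedBall, ← ENNReal.ofReal_mul (by positivity)]
  exact (ENNReal.le_ofReal_iff_toReal_le (measure_ne_top _ _)
    (measureReal_nonneg.trans h)).mpr h

/-- For `m`-almost every `x`, the quotients `|B| / m(B)` over shrinking balls at `x` have a finite
limit, hence the Poisson integral of `m` does not tend to zero. -/
lemma ae_not_tendsto_im_zero (m : Measure ℝ) [IsFiniteMeasure m] :
    ∀ᵐ x ∂m, ¬ Tendsto (fun n : ℕ => (cauchyTransform m ((x : ℝ) + height n * I)).im)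
      atTop (𝓝 0) := by
  filter_upwards [Besicovitch.ae_tendsto_rnDeriv (volume : Measure ℝ) m,
    Measure.rnDeriv_lt_top (volume : Measure ℝ) m] with x hx hlt h0
  have h1 := hx.comp tendsto_height
  have h2 : Tendsto (fun n : ℕ =>
      (ENNReal.ofReal (cauchyTransform m ((x : ℝ) + height n * I)).im)⁻¹) atTop (𝓝 ∞) := by
    have := tendsto_inv_iff.mpr (ENNReal.tendsto_ofReal h0)
    simpa using this
  have h3 : Tendsto (fun n : ℕ => volume (Metric.closedBall x (height n)) /
      m (Metric.closedBall x (height n))) atTop (𝓝 ∞) :=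
    tendsto_of_tendsto_of_tendsto_of_le_of_le h2 tendsto_const_nhds
      (fun n => inv_poisson_le m x (height_pos n)) (fun n => le_top)
  exact hlt.ne (tendsto_nhds_unique h1 h3)

/-- At almost every point of the singular part, `m` has infinite density: the derivative of
Lebesgue measure with respect to `m` vanishes on a Lebesgue-null carrier of the singular part. -/
lemma singular_tendsto (m : Measure ℝ) [IsFiniteMeasure m] :
    ∀ᵐ x ∂(m.singularPart volume),
      Tendsto (fun r => volume (Metric.closedBall x r) / m (Metric.closedBall x r))
        (𝓝[>] 0) (𝓝 0) := by
  have h1 := Besicovitch.ae_tendsto_rnDeriv (volume : Measure ℝ) m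
  have h2 : ∀ᵐ x ∂(m.singularPart volume), (volume : Measure ℝ).rnDeriv m x = 0 := by
    obtain ⟨s, hs, h0, h1⟩ := Measure.mutuallySingular_singularPart m (volume : Measure ℝ)
    have h3 : ∫⁻ x in sᶜ, (volume : Measure ℝ).rnDeriv m x ∂m = 0 :=
      le_antisymm ((Measure.setLIntegral_rnDeriv_le _).trans h1.le) zero_le
    rw [lintegral_eq_zero_iff (Measure.measurable_rnDeriv _ _)] at h3
    have h4 := (ae_restrict_iff' hs.compl).mp h3
    have h5 := (Measure.absolutelyContinuous_of_le (Measure.singularPart_le m volume)).ae_le h4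
    have h6 : ∀ᵐ x ∂(m.singularPart volume), x ∈ sᶜ := by
      rw [ae_iff]; simpa using h0
    filter_upwards [h5, h6] with x hx hx'
    exact hx hx'
  have h3 := (Measure.absolutelyContinuous_of_le (Measure.singularPart_le m volume)).ae_le h1
  filter_upwards [h2, h3] with x hx hx'
  rwa [hx] at hx'

lemma singular_tendsto_im (m : Measure ℝ) [IsFiniteMeasure m] :
    ∀ᵐ x ∂(m.singularPart volume),
      Tendsto (fun n : ℕ => (cauchyTransform m ((x : ℝ) + height n * I)).im) atTop atTop := by
  filter_upwards [singular_tendsto m] with x hx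
  have h2 : Tendsto (fun n : ℕ =>
      (ENNReal.ofReal (cauchyTransform m ((x : ℝ) + height n * I)).im)⁻¹) atTop (𝓝 0) :=
    tendsto_of_tendsto_of_tendsto_of_le_of_le tendsto_const_nhds (hx.comp tendsto_height)
      (fun n => zero_le) (fun n => inv_poisson_le m x (height_pos n))
  have h3 := tendsto_inv_iff.mpr h2
  simp only [inv_inv, ENNReal.inv_zero] at h3
  exact ENNReal.tendsto_ofReal_nhds_top.mp h3

/-- A measure whose mass on balls is bounded by a multiple of their length is absolutely
continuous. -/
lemma absolutelyContinuous_of_closedBall_le (m : Measure ℝ) [IsFiniteMeasure m] {C : ℝ≥0∞}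
    (hC : C ≠ ∞)
    (h : ∀ (x r : ℝ), 0 < r → m (Metric.closedBall x r) ≤ C * volume (Metric.closedBall x r)) :
    m ≪ volume := by
  rw [← Measure.singularPart_eq_zero]
  have h1 : ∀ᵐ x ∂(m.singularPart volume), False := by
    filter_upwards [singular_tendsto m] with x hx
    have h2 : ∀ᶠ r in 𝓝[>] (0 : ℝ), C⁻¹ ≤
        volume (Metric.closedBall x r) / m (Metric.closedBall x r) := by
      filter_upwards [self_mem_nhdsWithin] with r hr
      rw [ENNReal.le_div_iff_mul_le (Or.inr (by simpa using hr)) (Or.inl (measure_ne_top _ _)), mul_comm,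
        ← div_eq_mul_inv]
      apply ENNReal.div_le_of_le_mul
      rw [mul_comm]
      exact h x r hr
    have h3 := ge_of_tendsto hx h2
    exact hC (by simpa using h3)
  simpa using h1

/-! ### Blaschke factors and harmonic measure -/

/-- The Blaschke factor `t ↦ (t - z) / (t - z̄)` of a point `z` off the real line; it is unimodular
on the line. -/
noncomputable def blaschke (z : ℂ) (t : ℝ) : ℂ := ((t : ℂ) - z) * ((t : ℂ) - conj z)⁻¹

lemma conj_im_ne {z : ℂ} (hz : z.im ≠ 0) : (conj z).im ≠ 0 := by simpa using hz

lemma conj_blaschke (z : ℂ) (t : ℝ) :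
    conj (blaschke z t) = ((t : ℂ) - conj z) * ((t : ℂ) - z)⁻¹ := by
  simp [blaschke]

lemma blaschke_mul_conj {z : ℂ} (hz : z.im ≠ 0) (t : ℝ) :
    blaschke z t * conj (blaschke z t) = 1 := by
  have h1 := ofReal_sub_ne_zero hz t
  have h2 := ofReal_sub_ne_zero (conj_im_ne hz) t
  rw [conj_blaschke, blaschke]
  field_simp

lemma norm_blaschke {z : ℂ} (hz : z.im ≠ 0) (t : ℝ) : ‖blaschke z t‖ = 1 := by
  have h := congrArg norm (blaschke_mul_conj hz t)
  rw [norm_mul, RCLike.norm_conj, norm_one] at h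
  nlinarith [norm_nonneg (blaschke z t)]

lemma blaschke_eq {z : ℂ} (hz : z.im ≠ 0) (t : ℝ) :
    blaschke z t = 1 + (conj z - z) * ((t : ℂ) - conj z)⁻¹ := by
  have h2 := ofReal_sub_ne_zero (conj_im_ne hz) t
  rw [blaschke]
  field_simp
  ring

lemma continuous_blaschke {z : ℂ} (hz : z.im ≠ 0) : Continuous (blaschke z) := by
  unfold blaschke
  refine Continuous.mul (by fun_prop) (Continuous.inv₀ (by fun_prop) ?_)
  exact ofReal_sub_ne_zero (conj_im_ne hz)

lemma blaschke_injective {z : ℂ} (hz : z.im ≠ 0) : Function.Injective (blaschke z) := by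
  intro s t h
  have hs := ofReal_sub_ne_zero (conj_im_ne hz) s
  have ht := ofReal_sub_ne_zero (conj_im_ne hz) t
  rw [blaschke_eq hz, blaschke_eq hz] at h
  have hne : conj z - z ≠ 0 := by
    intro h0
    have := congrArg Complex.im h0
    simp at this
    exact hz (by linarith)
  have h1 := mul_left_cancel₀ hne (add_left_cancel h)
  have h2 := inv_injective h1
  exact_mod_cast sub_left_injective h2

/-- `blaschke z` as a bounded continuous function. -/
noncomputable def blaschkeBCF {z : ℂ} (hz : z.im ≠ 0) : BoundedContinuousFunction ℝ ℂ :=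
  BoundedContinuousFunction.ofNormedAddCommGroup (blaschke z) (continuous_blaschke hz) 1
    (fun t => (norm_blaschke hz t).le)

lemma blaschkeBCF_apply {z : ℂ} (hz : z.im ≠ 0) (t : ℝ) : blaschkeBCF hz t = blaschke z t := rfl

/-- A finite measure on the line is determined by its total mass and by the integrals of the
positive powers of a Blaschke factor: together with their conjugates these powers span a
point-separating star algebra. -/
lemma measure_ext_blaschke {z : ℂ} (hz : z.im ≠ 0) (P Q : Measure ℝ) [IsFiniteMeasure P]
    [IsFiniteMeasure Q] (h : ∀ n : ℕ, ∫ t, blaschke z t ^ n ∂P = ∫ t, blaschke z t ^ n ∂Q) :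
    P = Q := by
  set b := blaschkeBCF hz with hb
  have hbb : b * star b = 1 := by
    ext t
    simpa [hb, blaschkeBCF_apply] using blaschke_mul_conj hz t
  have hbb' : star b * b = 1 := by rw [mul_comm]; exact hbb
  refine ext_of_forall_mem_subalgebra_integral_eq_of_polish (𝕜 := ℂ)
    (A := StarAlgebra.adjoin ℂ {b}) ?_ ?_
  · intro s t hst
    refine ⟨blaschke z, ⟨⟨blaschke z, continuous_blaschke hz⟩, ?_, rfl⟩, ?_⟩
    · exact ⟨b, StarAlgebra.self_mem_adjoin_singleton ℂ b, rfl⟩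
    · exact fun h => hst (blaschke_injective hz h)
  · intro g hg
    have hg' : g ∈ Subalgebra.toSubmodule (Algebra.adjoin ℂ ({b} ∪ star {b} :
        Set (BoundedContinuousFunction ℝ ℂ))) := hg
    rw [Algebra.adjoin_eq_span] at hg'
    clear hg
    induction hg' using Submodule.span_induction with
    | mem x hx =>
      have hx' : ∃ n : ℕ, x = b ^ n ∨ x = star b ^ n := by
        induction hx using Submonoid.closure_induction_left with
        | one => exact ⟨0, Or.inl (by simp)⟩
        | mul_left y hy w _ ih =>
          obtain ⟨n, ih⟩ := ih
          have hy' : y = b ∨ y = star b := by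
            rcases hy with hy | hy
            · exact Or.inl hy
            · exact Or.inr (by rw [← star_star y, (show star y = b from hy)])
          rcases hy' with rfl | rfl <;> rcases ih with rfl | rfl
          · exact ⟨n + 1, Or.inl (pow_succ' _ _).symm⟩
          · cases n with
            | zero => exact ⟨1, Or.inl (by simp)⟩
            | succ n => exact ⟨n, Or.inr (by rw [pow_succ', ← mul_assoc, hbb, one_mul])⟩
          · cases n with
            | zero => exact ⟨1, Or.inr (by simp)⟩
            | succ n => exact ⟨n, Or.inl (by rw [pow_succ', ← mul_assoc, hbb', one_mul])⟩
          · exact ⟨n + 1, Or.inr (pow_succ' _ _).symm⟩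
      obtain ⟨n, rfl | rfl⟩ := hx'
      · simpa [hb, blaschkeBCF_apply] using h n
      · have := congrArg conj (h n)
        rw [← integral_conj, ← integral_conj] at this
        simpa [hb, blaschkeBCF_apply] using this
    | zero => simp
    | add x y _ _ hx hy =>
      simp only [BoundedContinuousFunction.coe_add, Pi.add_apply]
      rw [integral_add (x.integrable P) (y.integrable P),
        integral_add (x.integrable Q) (y.integrable Q), hx, hy]
    | smul c x _ hx =>
      simp only [BoundedContinuousFunction.coe_smul]
      rw [integral_smul, integral_smul, hx]


lemma integrable_poisson_volume {z : ℂ} (hz : 0 < z.im) :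
    Integrable (fun t : ℝ => z.im / normSq ((t : ℂ) - z)) := by
  have h := ((integrable_inv_one_add_sq.comp_div hz.ne').comp_sub_right z.re).const_mul z.im⁻¹
  refine h.congr (ae_of_all _ fun t => ?_)
  have h2 : normSq ((t : ℂ) - z) ≠ 0 := normSq_eq_zero.not.mpr (ofReal_sub_ne_zero hz.ne' t)
  have h3 : normSq ((t : ℂ) - z) = (t - z.re) ^ 2 + z.im ^ 2 := by
    simp [normSq_apply]; ring
  rw [h3] at h2
  have h4 : z.im ^ 2 + (t - z.re) ^ 2 ≠ 0 := by rwa [add_comm]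
  simp only [h3]
  field_simp
  ring

/-- The harmonic measure of the half-plane at `z`, that is `π` times the Cauchy distribution. -/
noncomputable def harmonicMeasure (z : ℂ) : Measure ℝ :=
  volume.withDensity fun t : ℝ => ENNReal.ofReal (z.im / normSq ((t : ℂ) - z))

lemma isFiniteMeasure_poisson {z : ℂ} (hz : 0 < z.im) : IsFiniteMeasure (harmonicMeasure z) :=
  isFiniteMeasure_withDensity_ofReal (integrable_poisson_volume hz).2

lemma harmonicMeasure_eq_zero {z : ℂ} (hz : 0 < z.im) {s : Set ℝ} (hs : MeasurableSet s)
    (h : harmonicMeasure z s = 0) : volume s = 0 := by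
  rw [harmonicMeasure, withDensity_apply _ hs, lintegral_eq_zero_iff (by fun_prop)] at h
  have h2 : ∀ᵐ t ∂(volume.restrict s), False := by
    filter_upwards [h] with t ht
    have : 0 < z.im / normSq ((t : ℂ) - z) :=
      div_pos hz (normSq_pos.mpr (ofReal_sub_ne_zero hz.ne' t))
    simp only [Pi.zero_apply, ENNReal.ofReal_eq_zero] at ht
    linarith
  simpa using h2

lemma tendsto_blaschke {z : ℂ} (hz : z.im ≠ 0) {l : Filter ℝ}
    (hl : Tendsto (fun t : ℝ => ‖((t : ℂ) - conj z)‖) l atTop) :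
    Tendsto (blaschke z) l (𝓝 1) := by
  have h1 : Tendsto (fun t : ℝ => ((t : ℂ) - conj z)⁻¹) l (𝓝 0) := by
    rw [tendsto_zero_iff_norm_tendsto_zero]
    simp only [norm_inv]
    exact hl.inv_tendsto_atTop
  have h2 := (h1.const_mul (conj z - z)).const_add 1
  simp only [mul_zero, add_zero] at h2
  exact h2.congr fun t => (blaschke_eq hz t).symm

lemma tendsto_norm_sub_atTop (w : ℂ) : Tendsto (fun t : ℝ => ‖((t : ℂ) - w)‖) atTop atTop := by
  refine tendsto_atTop_mono (fun t => ?_) (tendsto_atTop_add_const_right atTop (-w.re) tendsto_id)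
  have := (le_abs_self _).trans (Complex.abs_re_le_norm ((t : ℂ) - w))
  simpa [sub_eq_add_neg] using this

lemma tendsto_norm_sub_atBot (w : ℂ) : Tendsto (fun t : ℝ => ‖((t : ℂ) - w)‖) atBot atTop := by
  refine tendsto_atTop_mono (fun t => ?_)
    (tendsto_atTop_add_const_right atBot w.re tendsto_neg_atBot_atTop)
  have := (neg_le_abs _).trans (Complex.abs_re_le_norm ((t : ℂ) - w))
  simp at this ⊢
  linarith

/-- The nonconstant powers of a Blaschke factor have mean zero for the harmonic measure at its
zero, because `(bⁿ)' = 2 i n bⁿ · Im z / |t - z|²` and `b → 1` at both ends of the line. -/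
lemma integral_blaschke_poisson {z : ℂ} (hz : 0 < z.im) {n : ℕ} (hn : n ≠ 0) :
    ∫ t, blaschke z t ^ n ∂(harmonicMeasure z) = 0 := by
  have h_int := integrable_poisson_volume hz
  have hder : ∀ t : ℝ, HasDerivAt (fun t : ℝ => blaschke z t ^ n)
      ((2 * I * n) * (((z.im / normSq ((t : ℂ) - z) : ℝ) : ℂ) * blaschke z t ^ n)) t := by
    intro t
    have h1 := ofReal_sub_ne_zero hz.ne' t
    have h2 := ofReal_sub_ne_zero (conj_im_ne hz.ne') t
    have h3 : HasDerivAt (fun t : ℝ => (t : ℂ)) 1 t := Complex.ofRealCLM.hasDerivAt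
    have h4 : HasDerivAt (fun t : ℝ => blaschke z t)
        (1 * ((t : ℂ) - conj z)⁻¹ + ((t : ℂ) - z) * (-1 / ((t : ℂ) - conj z) ^ 2)) t :=
      (h3.sub_const z).mul ((h3.sub_const (conj z)).inv h2)
    refine (h4.pow n).congr_deriv ?_
    have h5 : ((z.im / normSq ((t : ℂ) - z) : ℝ) : ℂ) =
        (z - conj z) / (2 * I) / (((t : ℂ) - z) * ((t : ℂ) - conj z)) := by
      have : ((t : ℂ) - z) * ((t : ℂ) - conj z) = (normSq ((t : ℂ) - z) : ℂ) := by
        rw [normSq_eq_conj_mul_self]; simp [mul_comm]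
      rw [this, Complex.sub_conj]
      push_cast
      field_simp
    obtain ⟨k, rfl⟩ := Nat.exists_eq_succ_of_ne_zero hn
    rw [h5, Nat.succ_eq_add_one, Nat.add_sub_cancel, pow_succ (blaschke z t)]
    have h6 : blaschke z t = ((t : ℂ) - z) * ((t : ℂ) - conj z)⁻¹ := rfl
    generalize blaschke z t ^ k = w
    rw [h6]
    field_simp
    ring
  have hi : Integrable (fun t : ℝ =>
      ((z.im / normSq ((t : ℂ) - z) : ℝ) : ℂ) * blaschke z t ^ n) := by
    refine h_int.ofReal.mul_bdd (c := 1)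
      ((continuous_blaschke hz.ne').pow n).aestronglyMeasurable (ae_of_all _ fun t => ?_)
    simp [norm_blaschke hz.ne']
  have h := integral_of_hasDerivAt_of_tendsto hder (hi.const_mul _)
    ((tendsto_blaschke hz.ne' (tendsto_norm_sub_atBot _)).pow n)
    ((tendsto_blaschke hz.ne' (tendsto_norm_sub_atTop _)).pow n)
  rw [integral_const_mul, sub_self] at h
  have hne : (2 * I * n : ℂ) ≠ 0 := by simp [hn]
  rw [harmonicMeasure, integral_withDensity_eq_integral_toReal_smul (by fun_prop)
    (ae_of_all _ fun _ => ENNReal.ofReal_lt_top)]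
  rw [← (mul_eq_zero.mp h).resolve_left hne]
  refine integral_congr_ae (ae_of_all _ fun t => ?_)
  simp only
  rw [ENNReal.toReal_ofReal (div_nonneg hz.le (normSq_nonneg _))]
  simp

/-- If the positive powers of a Blaschke factor have mean zero for `P`, then `P` is a multiple of
harmonic measure; so `P` vanishes as soon as it gives no mass to a set of positive length. -/
lemma measure_eq_zero_of_blaschke {z : ℂ} (hz : 0 < z.im) (P : Measure ℝ) [IsFiniteMeasure P]
    (h : ∀ n : ℕ, n ≠ 0 → ∫ t, blaschke z t ^ n ∂P = 0) {s : Set ℝ} (hs : MeasurableSet s)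
    (hvol : volume s ≠ 0) (hP : P s = 0) : P = 0 := by
  have := isFiniteMeasure_poisson hz
  have hs0 : harmonicMeasure z s ≠ 0 := fun h0 => hvol (harmonicMeasure_eq_zero hz hs h0)
  have hu : harmonicMeasure z univ ≠ 0 := fun h0 => hs0 (measure_mono_null (subset_univ _) h0)
  set c : ℝ≥0∞ := P univ / harmonicMeasure z univ with hc
  have hctop : c ≠ ∞ := ENNReal.div_ne_top (measure_ne_top _ _) hu
  have hfin : IsFiniteMeasure (c • harmonicMeasure z) := Measure.smul_finite _ hctop
  have key : P = c • harmonicMeasure z := by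
    apply measure_ext_blaschke hz.ne'
    intro n
    by_cases hn : n = 0
    · subst hn
      simp only [pow_zero, integral_const, Measure.real, Measure.smul_apply, smul_eq_mul]
      rw [hc, ENNReal.div_mul_cancel hu (measure_ne_top _ _)]
    · rw [h n hn, integral_smul_measure, integral_blaschke_poisson hz hn, smul_zero]
  have h0 : c * harmonicMeasure z s = 0 := by
    rw [← hP]; conv_rhs => rw [key]
    rfl
  have hc0 : c = 0 := (mul_eq_zero.mp h0).resolve_right hs0
  rw [key, hc0, zero_smul]

/-! ### A uniqueness theorem of Hardy class type -/

section HardyUniqueness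

variable {X : Type*} [MeasurableSpace X] {ν : Measure X}

lemma memLp_bdd_mul (φ : X → ℂ) (hφ : Measurable φ) (C : ℝ) (hC : ∀ x, ‖φ x‖ ≤ C) {u : X → ℂ}
    (hu : MemLp u 2 ν) : MemLp (fun x => φ x * u x) 2 ν :=
  hu.of_le_mul (c := C) (hφ.aestronglyMeasurable.mul hu.1)
    (ae_of_all _ fun x => by
      rw [norm_mul]; exact mul_le_mul_of_nonneg_right (hC x) (norm_nonneg _))

/-- Multiplication by a bounded measurable function as an operator on `L²`. -/
noncomputable def mulOp (ν : Measure X) (φ : X → ℂ) (hφ : Measurable φ) (C : ℝ)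
    (hC : ∀ x, ‖φ x‖ ≤ C) :
    Lp ℂ 2 ν →L[ℂ] Lp ℂ 2 ν :=
  have hmem : ∀ u : Lp ℂ 2 ν, MemLp (fun x => φ x * u x) 2 ν := fun u =>
    memLp_bdd_mul φ hφ C hC (Lp.memLp u)
  LinearMap.mkContinuous
    { toFun := fun u => (hmem u).toLp
      map_add' := fun u w => by
        ext1
        filter_upwards [(hmem (u + w)).coeFn_toLp, (hmem u).coeFn_toLp, (hmem w).coeFn_toLp,
          Lp.coeFn_add u w, Lp.coeFn_add (hmem u).toLp (hmem w).toLp] with x h1 h2 h3 h4 h5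
        rw [h1, h5, Pi.add_apply, h2, h3, h4, Pi.add_apply, mul_add]
      map_smul' := fun c u => by
        ext1
        filter_upwards [(hmem (c • u)).coeFn_toLp, (hmem u).coeFn_toLp,
          Lp.coeFn_smul c u, Lp.coeFn_smul c (hmem u).toLp] with x h1 h2 h4 h5
        rw [h1, RingHom.id_apply, h5, Pi.smul_apply, h2, h4, Pi.smul_apply, smul_eq_mul,
          smul_eq_mul]
        ring } C
    (fun u => Lp.norm_le_mul_norm_of_ae_le_mul (by
      filter_upwards [(hmem u).coeFn_toLp] with x h1
      simp only [LinearMap.coe_mk, AddHom.coe_mk]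
      rw [h1, norm_mul]
      exact mul_le_mul_of_nonneg_right (hC x) (norm_nonneg _)))

lemma coeFn_mulOp (φ : X → ℂ) (hφ : Measurable φ) (C : ℝ)
    (hC : ∀ x, ‖φ x‖ ≤ C) (u : Lp ℂ 2 ν) :
    mulOp ν φ hφ C hC u =ᵐ[ν] fun x => φ x * u x :=
  MemLp.coeFn_toLp (memLp_bdd_mul φ hφ C hC (Lp.memLp u))

lemma coeFn_mulOp_pow (φ : X → ℂ) (hφ : Measurable φ) (C : ℝ)
    (hC : ∀ x, ‖φ x‖ ≤ C) (n : ℕ) (u : Lp ℂ 2 ν) :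
    ((mulOp ν φ hφ C hC ^ n) u : Lp ℂ 2 ν) =ᵐ[ν] fun x => φ x ^ n * u x := by
  induction n with
  | zero => simp
  | succ n ih =>
    rw [pow_succ']
    filter_upwards [ih, coeFn_mulOp φ hφ C hC ((mulOp ν φ hφ C hC ^ n) u)] with x h1 h2
    rw [mul_apply_eq_comp, h2, h1]
    ring

/-- A Cauchy integral which vanishes identically in the lower half-plane has vanishing
derivatives there. -/
lemma integral_resolvent_pow_eq_zero {τ : X → ℝ} (hτ : Measurable τ) {v : X → ℂ}
    (hv : Integrable v ν)
    (h : ∀ ζ : ℂ, ζ.im < 0 → ∫ x, ((τ x : ℂ) - ζ)⁻¹ * v x ∂ν = 0) (k : ℕ) :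
    ∀ ζ : ℂ, ζ.im < 0 → ∫ x, (((τ x : ℂ) - ζ)⁻¹) ^ (k + 1) * v x ∂ν = 0 := by
  induction k with
  | zero => simpa using h
  | succ k ih =>
    intro ζ₀ hζ₀
    have hmeas : ∀ (ζ : ℂ) (j : ℕ), Measurable fun x => (((τ x : ℂ) - ζ)⁻¹) ^ j := by
      intro ζ j; fun_prop
    set r : ℝ := (-ζ₀.im) / 2 with hr
    have hr0 : 0 < r := by rw [hr]; linarith
    have hopen : IsOpen {ζ : ℂ | ζ.im < -r} := isOpen_lt Complex.continuous_im continuous_const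
    have hs : {ζ : ℂ | ζ.im < -r} ∈ 𝓝 ζ₀ :=
      hopen.mem_nhds (show ζ₀.im < -r by rw [hr]; linarith)
    have hbd : ∀ ζ ∈ {ζ : ℂ | ζ.im < -r}, ∀ t : ℝ, ‖((t : ℂ) - ζ)⁻¹‖ ≤ r⁻¹ := by
      intro ζ hζ t
      have hζ' : ζ.im < -r := hζ
      refine (norm_resolvent_le (by linarith : ζ.im < 0).ne t).trans (inv_anti₀ hr0 ?_)
      rw [abs_of_neg (by linarith)]; linarith
    have hd := hasDerivAt_integral_of_dominated_loc_of_deriv_le (μ := ν) (𝕜 := ℂ)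
      (F := fun ζ x => (((τ x : ℂ) - ζ)⁻¹) ^ (k + 1) * v x)
      (F' := fun ζ x => ((k + 1 : ℕ) : ℂ) * ((((τ x : ℂ) - ζ)⁻¹) ^ (k + 2) * v x))
      (bound := fun x => ((k + 1 : ℕ) : ℝ) * ((r⁻¹) ^ (k + 2) * ‖v x‖)) (x₀ := ζ₀) hs
      (Eventually.of_forall fun ζ => (hmeas ζ _).aestronglyMeasurable.mul hv.1)
      (hv.bdd_mul (c := (r⁻¹) ^ (k + 1)) (hmeas ζ₀ _).aestronglyMeasurable
        (ae_of_all _ fun x => by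
          rw [norm_pow]
          exact pow_le_pow_left₀ (norm_nonneg _) (hbd ζ₀ (mem_of_mem_nhds hs) _) _))
      (((hmeas ζ₀ _).aestronglyMeasurable.mul hv.1).const_mul _)
      (ae_of_all _ fun x ζ hζ => by
        rw [norm_mul, norm_mul, norm_pow, Complex.norm_natCast]
        gcongr
        exact hbd ζ hζ _)
      ((hv.norm.const_mul _).const_mul _)
      (ae_of_all _ fun x ζ hζ => by
        have hζ' : ζ.im < -r := hζ
        have hne := ofReal_sub_ne_zero (by linarith : ζ.im < 0).ne (τ x)
        have h1 : HasDerivAt (fun ζ : ℂ => ((τ x : ℂ) - ζ)⁻¹) (-(-1) / ((τ x : ℂ) - ζ) ^ 2) ζ :=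
          ((hasDerivAt_id ζ).const_sub _).inv hne
        refine ((h1.pow (k + 1)).mul_const (v x)).congr_deriv ?_
        simp only [Nat.add_sub_cancel]
        rw [neg_neg, one_div, ← inv_pow]
        ring)
    have h0 : HasDerivAt (fun ζ => ∫ x, (((τ x : ℂ) - ζ)⁻¹) ^ (k + 1) * v x ∂ν) 0 ζ₀ := by
      refine (hasDerivAt_const ζ₀ (0 : ℂ)).congr_of_eventuallyEq ?_
      filter_upwards [hs] with ζ hζ
      exact ih ζ (by have hζ' : ζ.im < -r := hζ; linarith)
    have h1 := hd.2.unique h0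
    rw [integral_const_mul] at h1
    exact (mul_eq_zero.mp h1).resolve_left (by exact_mod_cast (Nat.succ_ne_zero k))

lemma integral_blaschke_pow_resolvent_eq_zero [IsFiniteMeasure ν] {τ : X → ℝ} (hτ : Measurable τ)
    {v : X → ℂ} (hv : Integrable v ν)
    (h : ∀ ζ : ℂ, ζ.im < 0 → ∫ x, ((τ x : ℂ) - ζ)⁻¹ * v x ∂ν = 0) {z : ℂ} (hz : 0 < z.im)
    (n : ℕ) : ∀ k : ℕ,
    ∫ x, blaschke z (τ x) ^ n * ((((τ x : ℂ) - conj z)⁻¹) ^ (k + 1) * v x) ∂ν = 0 := by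
  have h_int : ∀ n k : ℕ, Integrable
      (fun x => blaschke z (τ x) ^ n * ((((τ x : ℂ) - conj z)⁻¹) ^ k * v x)) ν := by
    intro n k
    have h1 : Integrable (fun x => (((τ x : ℂ) - conj z)⁻¹) ^ k * v x) ν := by
      refine hv.bdd_mul (c := (|(conj z).im|⁻¹) ^ k)
        (Measurable.aestronglyMeasurable (by fun_prop)) (ae_of_all _ fun x => ?_)
      rw [norm_pow]
      exact pow_le_pow_left₀ (norm_nonneg _) (norm_resolvent_le (conj_im_ne hz.ne') _) _
    refine h1.bdd_mul (c := 1) ?_ (ae_of_all _ fun x => by simp [norm_blaschke hz.ne'])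
    exact (((continuous_blaschke hz.ne').measurable.comp hτ).pow_const n).aestronglyMeasurable
  induction n with
  | zero =>
    intro k
    simpa using integral_resolvent_pow_eq_zero hτ hv h k (conj z) (by simpa using hz)
  | succ n ih =>
    intro k
    have h1 : ∀ x, blaschke z (τ x) ^ (n + 1) * ((((τ x : ℂ) - conj z)⁻¹) ^ (k + 1) * v x) =
        blaschke z (τ x) ^ n * ((((τ x : ℂ) - conj z)⁻¹) ^ (k + 1) * v x) + (conj z - z) *
        (blaschke z (τ x) ^ n * ((((τ x : ℂ) - conj z)⁻¹) ^ (k + 1 + 1) * v x)) := by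
      intro x
      rw [pow_succ (blaschke z (τ x)), blaschke_eq hz.ne']
      ring
    simp_rw [h1]
    rw [integral_add (h_int _ _) ((h_int _ _).const_mul _), integral_const_mul, ih, ih]
    simp

/-- **Uniqueness for boundary functions of Hardy class.** Let `v ∈ L²(ν)` have a Cauchy integral
(with respect to the coordinate `τ`) which vanishes in the lower half-plane, and suppose that `v`
vanishes over a set `E` of positive length. Then the Cauchy integral vanishes in the upper
half-plane as well.

The argument is that of Beurling and Szegő. Put `b = blaschke z ∘ τ`, `v₀ = v / (τ - z̄)`, and let
`q` be the component of `v₀` orthogonal to the closed span `N` of `bⁿ v₀`, `n ≥ 1`. As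
`bⁿ q ∈ N`, the measure `|q|² ν` projects under `τ` to a multiple of harmonic measure, and `q = 0`
over `E` forces `q = 0`. So `v₀ ∈ N`, whereas `u ↦ ∫ b⁻¹ u` kills `N`; and
`b⁻¹ v₀ = v / (τ - z)`. -/
lemma hardy_uniqueness [IsFiniteMeasure ν] {τ : X → ℝ} (hτ : Measurable τ) {v : X → ℂ}
    (hv : MemLp v 2 ν) {E : Set ℝ} (hE : MeasurableSet E) (hvol : volume E ≠ 0)
    (hvE : ∀ᵐ x ∂ν, τ x ∈ E → v x = 0)
    (h : ∀ ζ : ℂ, ζ.im < 0 → ∫ x, ((τ x : ℂ) - ζ)⁻¹ * v x ∂ν = 0) {z : ℂ} (hz : 0 < z.im) :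
    ∫ x, ((τ x : ℂ) - z)⁻¹ * v x ∂ν = 0 := by
  have hvi : Integrable v ν := hv.integrable (by norm_num)
  have hbm : Measurable fun x => blaschke z (τ x) := (continuous_blaschke hz.ne').measurable.comp hτ
  have hb1 : ∀ x, ‖blaschke z (τ x)‖ ≤ 1 := fun x => (norm_blaschke hz.ne' _).le
  have hv₀m : MemLp (fun x => ((τ x : ℂ) - conj z)⁻¹ * v x) 2 ν :=
    memLp_bdd_mul _ (by fun_prop) _ (fun x => norm_resolvent_le (conj_im_ne hz.ne') (τ x)) hv
  set v₀ : Lp ℂ 2 ν := hv₀m.toLp with hv₀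
  have hv₀c : v₀ =ᵐ[ν] fun x => ((τ x : ℂ) - conj z)⁻¹ * v x := hv₀m.coeFn_toLp
  set B := mulOp ν (fun x => blaschke z (τ x)) hbm 1 hb1 with hB
  have hBpow : ∀ (n : ℕ) (u : Lp ℂ 2 ν),
      ((B ^ n) u : Lp ℂ 2 ν) =ᵐ[ν] fun x => blaschke z (τ x) ^ n * u x :=
    fun n u => coeFn_mulOp_pow _ hbm 1 hb1 n u
  set S : Submodule ℂ (Lp ℂ 2 ν) := Submodule.span ℂ (range fun n : ℕ => (B ^ (n + 1)) v₀) with hS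
  set N : Submodule ℂ (Lp ℂ 2 ν) := S.topologicalClosure with hN
  have hNclosed : IsClosed (N : Set (Lp ℂ 2 ν)) := S.isClosed_topologicalClosure
  have hNle : ∀ T : Submodule ℂ (Lp ℂ 2 ν), IsClosed (T : Set (Lp ℂ 2 ν)) →
      (∀ n : ℕ, (B ^ (n + 1)) v₀ ∈ T) → N ≤ T := by
    intro T hT hmem
    refine S.topologicalClosure_minimal (Submodule.span_le.mpr ?_) hT
    rintro _ ⟨n, rfl⟩
    exact hmem n
  have hgen : ∀ n : ℕ, (B ^ (n + 1)) v₀ ∈ N := fun n =>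
    S.le_topologicalClosure (Submodule.subset_span ⟨n, rfl⟩)
  have hBN : ∀ u ∈ N, B u ∈ N := by
    have : N ≤ N.comap (B : Lp ℂ 2 ν →ₗ[ℂ] Lp ℂ 2 ν) := by
      refine hNle _ (hNclosed.preimage B.continuous) fun n => ?_
      have := hgen (n + 1)
      rw [pow_succ'] at this
      exact this
    exact fun u hu => this hu
  have hBnN : ∀ (n : ℕ), ∀ u ∈ N, (B ^ n) u ∈ N := by
    intro n
    induction n with
    | zero => intro u hu; simpa using hu
    | succ n ih =>
      intro u hu
      rw [pow_succ']
      exact hBN _ (ih u hu)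
  set q : Lp ℂ 2 ν := v₀ - N.starProjection v₀ with hq
  have hqN : q ∈ Nᗮ := N.sub_starProjection_mem_orthogonal v₀
  have hBq : ∀ n : ℕ, (B ^ (n + 1)) q ∈ N := by
    intro n
    rw [hq, map_sub]
    exact N.sub_mem (hgen n) (hBnN _ _ (N.starProjection_apply_mem v₀))
  -- `q` vanishes over `E`, since `v₀` and all elements of `N` do.
  have hind : ∀ x, ‖(τ ⁻¹' E).indicator (fun _ => (1 : ℂ)) x‖ ≤ 1 := by
    intro x
    by_cases hx : x ∈ τ ⁻¹' E <;> simp [hx]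
  set Q := mulOp ν ((τ ⁻¹' E).indicator fun _ => (1 : ℂ))
    (measurable_const.indicator (hτ hE)) 1 hind with hQ
  have hQiff : ∀ u : Lp ℂ 2 ν, Q u = 0 ↔ ∀ᵐ x ∂ν, τ x ∈ E → u x = 0 := by
    intro u
    rw [Lp.eq_zero_iff_ae_eq_zero]
    have h1 := coeFn_mulOp ((τ ⁻¹' E).indicator fun _ => (1 : ℂ))
      (measurable_const.indicator (hτ hE)) 1 hind u
    constructor
    · intro h2
      filter_upwards [h1, h2] with x hx1 hx2 hxE
      rw [hx1, indicator_of_mem (show x ∈ τ ⁻¹' E from hxE)] at hx2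
      simpa using hx2
    · intro h2
      filter_upwards [h1, h2] with x hx1 hx2
      rw [hx1]
      by_cases hxE : τ x ∈ E
      · simp [hx2 hxE]
      · rw [indicator_of_notMem (show x ∉ τ ⁻¹' E from hxE)]; simp
  have hQv₀ : Q v₀ = 0 := by
    rw [hQiff]
    filter_upwards [hv₀c, hvE] with x h1 h2 h3
    rw [h1, h2 h3, mul_zero]
  have hQN : N ≤ LinearMap.ker (Q : Lp ℂ 2 ν →ₗ[ℂ] Lp ℂ 2 ν) := by
    refine hNle _ Q.isClosed_ker fun n => ?_
    have h0 := (hQiff v₀).mp hQv₀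
    refine (hQiff _).mpr ?_
    filter_upwards [h0, hBpow (n + 1) v₀] with x h1 h2 h3
    rw [h2, h1 h3, mul_zero]
  have hQq : ∀ᵐ x ∂ν, τ x ∈ E → q x = 0 := by
    rw [← hQiff, hq, map_sub, hQv₀, zero_sub, neg_eq_zero]
    exact hQN (N.starProjection_apply_mem v₀)
  -- the projection of `|q|² ν` to the line
  have hqm : AEStronglyMeasurable q ν := Lp.aestronglyMeasurable q
  have hqd : AEMeasurable (fun x => ENNReal.ofReal (‖q x‖ ^ 2)) ν :=
    (hqm.norm.aemeasurable.pow_const 2).ennreal_ofReal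
  have hq2 : Integrable (fun x => ‖q x‖ ^ 2) ν := (Lp.memLp q).integrable_norm_pow (by norm_num)
  have hfin : IsFiniteMeasure (ν.withDensity fun x => ENNReal.ofReal (‖q x‖ ^ 2)) :=
    isFiniteMeasure_withDensity_ofReal hq2.2
  have hq0 : q = 0 := by
    set P := (ν.withDensity fun x => ENNReal.ofReal (‖q x‖ ^ 2)).map τ with hP
    have hP0 : P = 0 := by
      refine measure_eq_zero_of_blaschke hz P ?_ hE hvol ?_
      · intro n hn
        obtain ⟨k, rfl⟩ := Nat.exists_eq_succ_of_ne_zero hn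
        have h1 : inner ℂ q ((B ^ (k + 1)) q) = 0 :=
          (Submodule.mem_orthogonal' _ _).mp hqN _ (hBq k)
        rw [hP, integral_map (f := fun t => blaschke z t ^ k.succ) hτ.aemeasurable
          ((continuous_blaschke hz.ne').pow _).aestronglyMeasurable,
          integral_withDensity_eq_integral_toReal_smul₀ hqd
            (ae_of_all _ fun _ => ENNReal.ofReal_lt_top), ← h1, L2.inner_def]
        refine integral_congr_ae ?_
        filter_upwards [hBpow (k + 1) q] with x hx
        rw [hx, ENNReal.toReal_ofReal (by positivity), RCLike.inner_apply, mul_assoc,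
          RCLike.mul_conj, Complex.real_smul, mul_comm]
        simp
      · rw [hP, Measure.map_apply hτ hE, withDensity_apply _ (hτ hE),
          lintegral_eq_zero_iff' hqd.restrict]
        refine (ae_restrict_iff' (hτ hE)).mpr ?_
        filter_upwards [hQq] with x hx hxE
        simp [hx hxE]
    have h1 : ν.withDensity (fun x => ENNReal.ofReal (‖q x‖ ^ 2)) univ = 0 := by
      have := congrArg (fun m : Measure ℝ => m univ) hP0
      simpa [hP, Measure.map_apply hτ MeasurableSet.univ] using this
    rw [withDensity_apply _ MeasurableSet.univ, Measure.restrict_univ,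
      lintegral_eq_zero_iff' hqd] at h1
    rw [Lp.eq_zero_iff_ae_eq_zero]
    filter_upwards [h1] with x hx
    simpa using hx
  have hv₀N : v₀ ∈ N := by
    rw [hq, sub_eq_zero] at hq0
    rw [hq0]
    exact N.starProjection_apply_mem v₀
  -- the functional `u ↦ ∫ b⁻¹ u`
  have hbL : MemLp (fun x => blaschke z (τ x)) 2 ν :=
    MemLp.of_bound hbm.aestronglyMeasurable 1 (ae_of_all _ hb1)
  have hℓ : ∀ u : Lp ℂ 2 ν, inner ℂ hbL.toLp u = ∫ x, conj (blaschke z (τ x)) * u x ∂ν := by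
    intro u
    rw [L2.inner_def]
    refine integral_congr_ae ?_
    filter_upwards [hbL.coeFn_toLp] with x hx
    rw [hx, RCLike.inner_apply, mul_comm]
  have hker : N ≤ LinearMap.ker (innerSL ℂ hbL.toLp : Lp ℂ 2 ν →ₗ[ℂ] ℂ) := by
    refine hNle _ (innerSL ℂ hbL.toLp).isClosed_ker fun n => ?_
    have : inner ℂ hbL.toLp ((B ^ (n + 1)) v₀) = 0 := by
      rw [hℓ, ← integral_blaschke_pow_resolvent_eq_zero hτ hvi h hz n 0]
      refine integral_congr_ae ?_
      filter_upwards [hBpow (n + 1) v₀, hv₀c] with x h1 h2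
      have h3 := blaschke_mul_conj hz.ne' (τ x)
      rw [h1, h2, zero_add, pow_one, pow_succ]
      linear_combination (blaschke z (τ x) ^ n * (((τ x : ℂ) - conj z)⁻¹ * v x)) * h3
    simpa using this
  have hfinal : inner ℂ hbL.toLp v₀ = 0 := by simpa using hker hv₀N
  rw [hℓ] at hfinal
  rw [← hfinal]
  refine integral_congr_ae ?_
  filter_upwards [hv₀c] with x hx
  have h2 := ofReal_sub_ne_zero (conj_im_ne hz.ne') (τ x)
  rw [hx, conj_blaschke]
  field_simp

end HardyUniqueness

/-! ### Integrals over the coupling constant -/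

lemma one_add_ofReal_mul_ne_zero {F : ℂ} (hF : F.im ≠ 0) (α : ℝ) : 1 + (α : ℂ) * F ≠ 0 := by
  intro h
  have h2 := congrArg Complex.im h
  simp only [add_im, one_im, zero_add, im_ofReal_mul, zero_im, mul_eq_zero, hF, or_false] at h2
  rw [h2] at h
  simp at h

lemma im_div_one_add (F : ℂ) (α : ℝ) :
    (F / (1 + (α : ℂ) * F)).im = F.im / normSq (1 + (α : ℂ) * F) := by
  rw [Complex.div_im]
  simp only [add_re, one_re, re_ofReal_mul, add_im, one_im, im_ofReal_mul, zero_add]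
  rw [← sub_div]
  ring

/-- Averaging over the coupling constant: the integral of `Im (F / (1 + α F))` in `α` does not
depend on `F`. -/
lemma lintegral_im_div_one_add {F : ℂ} (hF : 0 < F.im) :
    ∫⁻ α : ℝ, ENNReal.ofReal ((F / (1 + (α : ℂ) * F)).im) = ENNReal.ofReal Real.pi := by
  have hD : 0 < normSq F := normSq_pos.mpr fun h => by simp [h] at hF
  set c := normSq F / F.im with hc
  have hcpos : 0 < c := div_pos hD hF
  set d := F.re / normSq F with hd
  have key : ∀ α : ℝ, (F / (1 + (α : ℂ) * F)).im = c * (1 + (c * (α + d)) ^ 2)⁻¹ := by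
    intro α
    have h0 : normSq (1 + (α : ℂ) * F) ≠ 0 := by
      rw [Ne, normSq_eq_zero]; exact one_add_ofReal_mul_ne_zero hF.ne' α
    rw [im_div_one_add, ← div_eq_mul_inv, div_eq_div_iff h0 (by positivity), hc, hd]
    have e : normSq F = F.re * F.re + F.im * F.im := normSq_apply F
    have e2 : normSq (1 + (α : ℂ) * F) = (1 + α * F.re) ^ 2 + (α * F.im) ^ 2 := by
      rw [normSq_apply]; simp; ring
    rw [e2]
    have hb := hF.ne'
    have hDn := hD.ne'
    have e3 : normSq F / F.im * (α + F.re / normSq F) = (α * normSq F + F.re) / F.im := by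
      field_simp
    rw [e3]
    field_simp
    rw [e]
    ring
  simp_rw [key]
  have hi : Integrable fun x : ℝ => (1 + x ^ 2)⁻¹ := integrable_inv_one_add_sq
  have hi2 : Integrable fun α : ℝ => (1 + (c * (α + d)) ^ 2)⁻¹ :=
    (hi.comp_mul_left' hcpos.ne').comp_add_right d
  rw [← ofReal_integral_eq_lintegral_ofReal (hi2.const_mul c)
    (ae_of_all _ fun x => by positivity)]
  congr 1
  rw [integral_const_mul, integral_add_right_eq_self (fun α : ℝ => (1 + (c * α) ^ 2)⁻¹) d,
    Measure.integral_comp_mul_left (fun x : ℝ => (1 + x ^ 2)⁻¹) c, integral_univ_inv_one_add_sq,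
    abs_of_pos (inv_pos.mpr hcpos), smul_eq_mul, mul_inv_cancel_left₀ (ne_of_gt hcpos)]


/-- The density of the finite measure `dα / (1 + α²)`, twisted by a unimodular factor so as to be
holomorphic in the upper half-plane. -/
noncomputable def couplingWeight (α : ℝ) : ℂ := (((α : ℂ) + I) ^ 2)⁻¹

lemma ofReal_add_I_ne_zero (α : ℝ) : (α : ℂ) + I ≠ 0 := by
  intro h; simpa using congrArg Complex.im h

lemma norm_couplingWeight (α : ℝ) : ‖couplingWeight α‖ = (1 + α ^ 2)⁻¹ := by
  rw [couplingWeight, norm_inv, norm_pow, ← normSq_eq_norm_sq, normSq_apply]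
  simp; ring

lemma measurable_couplingWeight : Measurable couplingWeight := by
  unfold couplingWeight; fun_prop

lemma integrable_couplingWeight : Integrable couplingWeight := by
  refine integrable_inv_one_add_sq.mono' measurable_couplingWeight.aestronglyMeasurable
    (ae_of_all _ fun α => (norm_couplingWeight α).le)

lemma integrable_couplingWeight_mul {p : ℂ} (hp : p.im ≠ 0) :
    Integrable fun α : ℝ => couplingWeight α * ((α : ℂ) - p)⁻¹ :=
  integrable_couplingWeight.mul_bdd (c := |p.im|⁻¹) (measurable_resolvent p).aestronglyMeasurable
    (ae_of_all _ fun α => norm_resolvent_le hp α)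

lemma hasDerivAt_ofReal_sub (p : ℂ) (α : ℝ) : HasDerivAt (fun α : ℝ => (α : ℂ) - p) 1 α :=
  (Complex.ofRealCLM.hasDerivAt (x := α)).sub_const p

lemma hasDerivAt_ofReal_sub_inv {p : ℂ} (hp : p.im ≠ 0) (α : ℝ) :
    HasDerivAt (fun α : ℝ => ((α : ℂ) - p)⁻¹) (-(((α : ℂ) - p) ^ 2)⁻¹) α := by
  refine ((hasDerivAt_ofReal_sub p α).fun_inv (ofReal_sub_ne_zero hp α)).congr_deriv ?_
  rw [neg_div, one_div]

lemma tendsto_ofReal_sub_inv (p : ℂ) {l : Filter ℝ}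
    (hl : Tendsto (fun t : ℝ => ‖(t : ℂ) - p‖) l atTop) :
    Tendsto (fun α : ℝ => ((α : ℂ) - p)⁻¹) l (𝓝 0) := by
  rw [tendsto_zero_iff_norm_tendsto_zero]
  refine hl.inv_tendsto_atTop.congr fun t => ?_
  simp

lemma div_mem_slitPlane {p q : ℂ} (hpq : 0 < p.im * q.im) (α : ℝ) :
    ((α : ℂ) - p) / ((α : ℂ) - q) ∈ slitPlane := by
  have hp : p.im ≠ 0 := fun h => by simp [h] at hpq
  have hq : q.im ≠ 0 := fun h => by simp [h] at hpq
  have hq0 := ofReal_sub_ne_zero hq α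
  rw [mem_slitPlane_iff_not_le_zero]
  intro hle
  obtain ⟨hre, him⟩ := Complex.le_def.mp hle
  set w := ((α : ℂ) - p) / ((α : ℂ) - q) with hw
  have h1 : (α : ℂ) - p = w * ((α : ℂ) - q) := by rw [hw, div_mul_cancel₀ _ hq0]
  have h2 := congrArg Complex.im h1
  simp only [sub_im, ofReal_im, zero_sub, mul_im, sub_re, ofReal_re] at h2
  simp only [zero_re, zero_im] at hre him
  rw [him] at h2
  have h3 : p.im = w.re * q.im := by linarith
  rw [h3] at hpq
  nlinarith [mul_self_nonneg q.im]

lemma hasDerivAt_log_ratio {p q : ℂ} (hpq : 0 < p.im * q.im) (α : ℝ) :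
    HasDerivAt (fun α : ℝ => Complex.log (((α : ℂ) - p) / ((α : ℂ) - q)))
      (((α : ℂ) - p)⁻¹ - ((α : ℂ) - q)⁻¹) α := by
  have hp : p.im ≠ 0 := fun h => by simp [h] at hpq
  have hq : q.im ≠ 0 := fun h => by simp [h] at hpq
  have hp0 := ofReal_sub_ne_zero hp α
  have hq0 := ofReal_sub_ne_zero hq α
  have := ((hasDerivAt_ofReal_sub p α).fun_div (hasDerivAt_ofReal_sub q α) hq0).clog_real
    (div_mem_slitPlane hpq α)
  refine this.congr_deriv ?_
  field_simp

lemma tendsto_log_ratio (p : ℂ) {q : ℂ} (hq : q.im ≠ 0) {l : Filter ℝ}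
    (hl : Tendsto (fun t : ℝ => ‖(t : ℂ) - q‖) l atTop) :
    Tendsto (fun α : ℝ => Complex.log (((α : ℂ) - p) / ((α : ℂ) - q))) l (𝓝 0) := by
  have h1 : Tendsto (fun α : ℝ => ((α : ℂ) - p) / ((α : ℂ) - q)) l (𝓝 1) := by
    have h2 : Tendsto (fun α : ℝ => 1 + (q - p) * ((α : ℂ) - q)⁻¹) l (𝓝 (1 + (q - p) * 0)) :=
      ((tendsto_ofReal_sub_inv q hl).const_mul _).const_add _
    rw [mul_zero, add_zero] at h2
    refine h2.congr fun α => ?_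
    have := ofReal_sub_ne_zero hq α
    field_simp
    ring
  have h3 := h1.clog (by simp)
  rwa [Complex.log_one] at h3

lemma neg_I_im : (-I).im ≠ 0 := by simp

/-- The weight is the boundary value of an `H¹` function in the upper half-plane, so its Cauchy
integral vanishes in the lower half-plane. -/
lemma integral_couplingWeight_mul_lower {p : ℂ} (hp : p.im < 0) :
    ∫ α : ℝ, couplingWeight α * ((α : ℂ) - p)⁻¹ = 0 := by
  have hi := integrable_couplingWeight_mul hp.ne
  have hsub : ∀ α : ℝ, (α : ℂ) - -I = (α : ℂ) + I := fun α => by ring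
  by_cases hpI : p = -I
  · have hd : ∀ α : ℝ, HasDerivAt (fun α : ℝ => (-1 / 2 : ℂ) * (((α : ℂ) - -I)⁻¹) ^ 2)
        (couplingWeight α * ((α : ℂ) - p)⁻¹) α := by
      intro α
      have := ((hasDerivAt_ofReal_sub_inv neg_I_im α).fun_pow 2).const_mul (-1 / 2 : ℂ)
      refine this.congr_deriv ?_
      rw [couplingWeight, hpI, hsub]
      have := ofReal_add_I_ne_zero α
      push_cast
      field_simp
    have hlim : ∀ l : Filter ℝ, Tendsto (fun t : ℝ => ‖(t : ℂ) - -I‖) l atTop →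
        Tendsto (fun α : ℝ => (-1 / 2 : ℂ) * (((α : ℂ) - -I)⁻¹) ^ 2) l (𝓝 0) := by
      intro l hl
      simpa using ((tendsto_ofReal_sub_inv (-I) hl).pow 2).const_mul (-1 / 2 : ℂ)
    rw [integral_of_hasDerivAt_of_tendsto hd hi (hlim _ (tendsto_norm_sub_atBot _))
      (hlim _ (tendsto_norm_sub_atTop _)), sub_zero]
  · have hpI' : p + I ≠ 0 := fun h => hpI (eq_neg_of_add_eq_zero_left h)
    have hpq : 0 < p.im * (-I).im := by simpa using hp
    have hd : ∀ α : ℝ, HasDerivAt (fun α : ℝ => ((p + I) ^ 2)⁻¹ *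
          Complex.log (((α : ℂ) - p) / ((α : ℂ) - -I)) + (p + I)⁻¹ * ((α : ℂ) - -I)⁻¹)
        (couplingWeight α * ((α : ℂ) - p)⁻¹) α := by
      intro α
      have := ((hasDerivAt_log_ratio hpq α).const_mul ((p + I) ^ 2)⁻¹).fun_add
        ((hasDerivAt_ofReal_sub_inv neg_I_im α).const_mul (p + I)⁻¹)
      refine this.congr_deriv ?_
      rw [couplingWeight, hsub]
      have h1 := ofReal_add_I_ne_zero α
      have h2 := ofReal_sub_ne_zero hp.ne α
      field_simp
      ring
    have hlim : ∀ l : Filter ℝ, Tendsto (fun t : ℝ => ‖(t : ℂ) - -I‖) l atTop →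
        Tendsto (fun α : ℝ => ((p + I) ^ 2)⁻¹ *
          Complex.log (((α : ℂ) - p) / ((α : ℂ) - -I)) + (p + I)⁻¹ * ((α : ℂ) - -I)⁻¹) l
          (𝓝 0) := by
      intro l hl
      simpa using ((tendsto_log_ratio p neg_I_im hl).const_mul ((p + I) ^ 2)⁻¹).add
        ((tendsto_ofReal_sub_inv (-I) hl).const_mul (p + I)⁻¹)
    rw [integral_of_hasDerivAt_of_tendsto hd hi (hlim _ (tendsto_norm_sub_atBot _))
      (hlim _ (tendsto_norm_sub_atTop _)), sub_zero]

lemma integral_couplingWeight_mul_upper {p : ℂ} (hp : 0 < p.im) :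
    ∫ α : ℝ, couplingWeight α * ((α : ℂ) - p)⁻¹ = 2 * Real.pi * I * ((p + I) ^ 2)⁻¹ := by
  have hi := integrable_couplingWeight_mul hp.ne'
  have hsub : ∀ α : ℝ, (α : ℂ) - -I = (α : ℂ) + I := fun α => by ring
  have hpI' : p + I ≠ 0 := fun h => by
    have := congrArg Complex.im h
    simp at this; linarith
  have hI : I.im ≠ 0 := by simp
  have hpq : 0 < p.im * I.im := by simpa using hp
  set Φ : ℝ → ℂ := fun α => ((p + I) ^ 2)⁻¹ * (Complex.log (((α : ℂ) - p) / ((α : ℂ) - I)) +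
    (2 * I) * (Real.arctan α : ℂ)) + (p + I)⁻¹ * ((α : ℂ) - -I)⁻¹ with hΦ
  have hd : ∀ α : ℝ, HasDerivAt Φ (couplingWeight α * ((α : ℂ) - p)⁻¹) α := by
    intro α
    have := (((hasDerivAt_log_ratio hpq α).fun_add
      ((Real.hasDerivAt_arctan α).ofReal_comp.const_mul (2 * I))).const_mul
        ((p + I) ^ 2)⁻¹).fun_add ((hasDerivAt_ofReal_sub_inv neg_I_im α).const_mul (p + I)⁻¹)
    refine this.congr_deriv ?_
    rw [couplingWeight, hsub]
    have h1 := ofReal_add_I_ne_zero α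
    have h2 := ofReal_sub_ne_zero hp.ne' α
    have h3 := ofReal_sub_ne_zero hI α
    have h4 : (2 * I) * ((1 / (1 + α ^ 2) : ℝ) : ℂ) = ((α : ℂ) - I)⁻¹ - ((α : ℂ) + I)⁻¹ := by
      have h5 : (1 + (α : ℂ) ^ 2) = ((α : ℂ) - I) * ((α : ℂ) + I) := by
        ring_nf; rw [I_sq]; ring
      push_cast
      rw [h5]
      field_simp
      ring
    rw [h4]
    field_simp
    ring
  have hlim : ∀ (l : Filter ℝ) (c : ℝ), (∀ w : ℂ, Tendsto (fun t : ℝ => ‖(t : ℂ) - w‖) l atTop) →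
      Tendsto Real.arctan l (𝓝 c) →
      Tendsto Φ l (𝓝 (((p + I) ^ 2)⁻¹ * (0 + 2 * I * (c : ℂ)) + (p + I)⁻¹ * 0)) := by
    intro l c hl hc
    exact (((tendsto_log_ratio p hI (hl _)).add
      (((continuous_ofReal.tendsto c).comp hc).const_mul (2 * I))).const_mul ((p + I) ^ 2)⁻¹).add
        ((tendsto_ofReal_sub_inv (-I) (hl _)).const_mul (p + I)⁻¹)
  rw [integral_of_hasDerivAt_of_tendsto hd hi
    (hlim atBot (-(Real.pi / 2)) tendsto_norm_sub_atBot
      (Real.tendsto_arctan_atBot.mono_right nhdsWithin_le_nhds))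
    (hlim atTop (Real.pi / 2) tendsto_norm_sub_atTop
      (Real.tendsto_arctan_atTop.mono_right nhdsWithin_le_nhds))]
  push_cast
  ring

/-- Rewriting of `(1 + α F)⁻¹` with its pole `-1 / F`, on the same side of the line as `F`. -/
lemma inv_one_add_mul {F : ℂ} (hF : F.im ≠ 0) (α : ℝ) :
    (1 + (α : ℂ) * F)⁻¹ = F⁻¹ * ((α : ℂ) - -F⁻¹)⁻¹ := by
  have h0 : F ≠ 0 := fun h => by simp [h] at hF
  rw [← mul_inv]
  congr 1
  field_simp
  ring

lemma neg_inv_im (F : ℂ) : (-F⁻¹).im = F.im / normSq F := by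
  rw [neg_im, inv_im]; ring

lemma integral_couplingWeight_lower {F : ℂ} (hF : F.im < 0) :
    ∫ α : ℝ, couplingWeight α * (1 + (α : ℂ) * F)⁻¹ = 0 := by
  have h0 : F ≠ 0 := fun h => by simp [h] at hF
  have hp : (-F⁻¹).im < 0 := by
    rw [neg_inv_im]; exact div_neg_of_neg_of_pos hF (normSq_pos.mpr h0)
  simp_rw [inv_one_add_mul hF.ne, mul_left_comm _ F⁻¹]
  rw [integral_const_mul, integral_couplingWeight_mul_lower hp, mul_zero]

lemma integral_couplingWeight_upper_ne_zero {F : ℂ} (hF : 0 < F.im) :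
    ∫ α : ℝ, couplingWeight α * (1 + (α : ℂ) * F)⁻¹ ≠ 0 := by
  have h0 : F ≠ 0 := fun h => by simp [h] at hF
  have hp : 0 < (-F⁻¹).im := by
    rw [neg_inv_im]; exact div_pos hF (normSq_pos.mpr h0)
  simp_rw [inv_one_add_mul hF.ne', mul_left_comm _ F⁻¹]
  rw [integral_const_mul, integral_couplingWeight_mul_upper hp]
  have hpI : -F⁻¹ + I ≠ 0 := fun h => by
    have := congrArg Complex.im h
    rw [add_im] at this
    simp only [I_im, zero_im] at this
    linarith
  have : (Real.pi : ℂ) ≠ 0 := by exact_mod_cast Real.pi_ne_zero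
  simp [h0, hpI, this]

/-! ### Rank-one perturbations and the Aronszajn–Krein formulas -/

/-- The data of the rank-one perturbation problem: the operators `A α = M_t + α ⟪1, ·⟫ 1` on
`L²(μ)`, the measures `μ_α`, and unitary maps `V α : L²(μ) → L²(μ_α)` which intertwine `A α` with
multiplication by `t` and fix the constant function one. -/
structure RankOneFamily (μ : Measure ℝ) where
  supp : ∃ K : Set ℝ, IsCompact K ∧ μ Kᶜ = 0
  one : Lp ℂ 2 μ
  coeFn_one : (one : ℝ → ℂ) =ᵐ[μ] fun _ => 1
  A : ℝ → (Lp ℂ 2 μ →L[ℂ] Lp ℂ 2 μ)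
  coeFn_A : ∀ (α : ℝ) (g : Lp ℂ 2 μ),
    (A α g : ℝ → ℂ) =ᵐ[μ] fun t => t * g t + (α : ℂ) * inner ℂ one g
  μm : ℝ → Measure ℝ
  fin : ∀ α, IsFiniteMeasure (μm α)
  V : ∀ α : ℝ, Lp ℂ 2 μ ≃ₗᵢ[ℂ] Lp ℂ 2 (μm α)
  coeFn_V_A : ∀ (α : ℝ) (g : Lp ℂ 2 μ),
    (V α (A α g) : ℝ → ℂ) =ᵐ[μm α] fun t => t * (V α g) t
  coeFn_V_one : ∀ α : ℝ, (V α one : ℝ → ℂ) =ᵐ[μm α] fun _ => 1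

namespace RankOneFamily

variable {μ : Measure ℝ} (R : RankOneFamily μ)

instance (α : ℝ) : IsFiniteMeasure (R.μm α) := R.fin α

lemma A_eq (α : ℝ) (g : Lp ℂ 2 μ) :
    R.A α g = R.A 0 g + ((α : ℂ) * inner ℂ R.one g) • R.one := by
  ext1
  filter_upwards [R.coeFn_A α g, R.coeFn_A 0 g, R.coeFn_one,
    Lp.coeFn_add (R.A 0 g) (((α : ℂ) * inner ℂ R.one g) • R.one),
    Lp.coeFn_smul ((α : ℂ) * inner ℂ R.one g) R.one] with t h1 h2 h3 h4 h5
  rw [h1, h4, Pi.add_apply, h2, h5, Pi.smul_apply, h3]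
  simp

lemma inner_one (g : Lp ℂ 2 μ) : inner ℂ R.one g = ∫ t, g t ∂μ := by
  rw [L2.inner_def]
  refine integral_congr_ae ?_
  filter_upwards [R.coeFn_one] with t ht
  rw [ht, RCLike.inner_apply]
  simp

lemma inner_V_one (α : ℝ) (h : Lp ℂ 2 (R.μm α)) : inner ℂ (R.V α R.one) h = ∫ t, h t ∂(R.μm α) := by
  rw [L2.inner_def]
  refine integral_congr_ae ?_
  filter_upwards [R.coeFn_V_one α] with t ht
  rw [ht, RCLike.inner_apply]
  simp

variable [IsFiniteMeasure μ]

lemma memLp_resolvent {z : ℂ} (hz : z.im ≠ 0) : MemLp (fun t : ℝ => ((t : ℂ) - z)⁻¹) 2 μ :=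
  MemLp.of_bound (measurable_resolvent z).aestronglyMeasurable _
    (ae_of_all _ fun t => norm_resolvent_le hz t)

lemma A_resolvent (α : ℝ) {z : ℂ} (hz : z.im ≠ 0) :
    R.A α (memLp_resolvent (μ := μ) hz).toLp =
      z • (memLp_resolvent (μ := μ) hz).toLp + (1 + (α : ℂ) * cauchyTransform μ z) • R.one := by
  set h := (memLp_resolvent (μ := μ) hz).toLp with hh
  have hc : h =ᵐ[μ] fun t : ℝ => ((t : ℂ) - z)⁻¹ := (memLp_resolvent (μ := μ) hz).coeFn_toLp
  have hi : inner ℂ R.one h = cauchyTransform μ z := by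
    rw [R.inner_one, cauchyTransform]
    exact integral_congr_ae hc
  ext1
  filter_upwards [R.coeFn_A α h, hc, R.coeFn_one,
    Lp.coeFn_add (z • h) ((1 + (α : ℂ) * cauchyTransform μ z) • R.one),
    Lp.coeFn_smul z h, Lp.coeFn_smul (1 + (α : ℂ) * cauchyTransform μ z) R.one]
    with t h1 h2 h3 h4 h5 h6
  rw [h1, h4, Pi.add_apply, h5, h6, Pi.smul_apply, Pi.smul_apply, h3, h2, hi]
  have := ofReal_sub_ne_zero hz t
  simp only [smul_eq_mul]
  field_simp
  ring

lemma V_resolvent (α : ℝ) {z : ℂ} (hz : z.im ≠ 0) :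
    R.V α (memLp_resolvent (μ := μ) hz).toLp =ᵐ[R.μm α]
      fun t => (1 + (α : ℂ) * cauchyTransform μ z) * ((t : ℂ) - z)⁻¹ := by
  set h := (memLp_resolvent (μ := μ) hz).toLp with hh
  have h0 := R.coeFn_V_A α h
  rw [hh, R.A_resolvent α hz, ← hh, map_add, map_smul, map_smul] at h0
  filter_upwards [h0, R.coeFn_V_one α,
    Lp.coeFn_add (z • R.V α h) ((1 + (α : ℂ) * cauchyTransform μ z) • R.V α R.one),
    Lp.coeFn_smul z (R.V α h), Lp.coeFn_smul (1 + (α : ℂ) * cauchyTransform μ z) (R.V α R.one)]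
    with t h1 h3 h4 h5 h6
  rw [h4, Pi.add_apply, h5, h6, Pi.smul_apply, Pi.smul_apply, h3] at h1
  have := ofReal_sub_ne_zero hz t
  simp only [smul_eq_mul] at h1
  rw [← div_eq_mul_inv, eq_div_iff this]
  linear_combination -h1

/-- The resolvent identity of rank-one perturbation theory (Aronszajn–Krein), tested against an
arbitrary vector `g`. -/
lemma aronszajn_krein (α : ℝ) {z : ℂ} (hz : z.im ≠ 0) (g : Lp ℂ 2 μ) :
    (1 + (α : ℂ) * cauchyTransform μ z) * ∫ t, ((t : ℂ) - z)⁻¹ * R.V α g t ∂(R.μm α) =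
      ∫ t, ((t : ℂ) - z)⁻¹ * g t ∂μ := by
  have hz' := conj_im_ne hz
  set h := (memLp_resolvent (μ := μ) hz').toLp with hh
  have hc : h =ᵐ[μ] fun t : ℝ => ((t : ℂ) - conj z)⁻¹ := (memLp_resolvent (μ := μ) hz').coeFn_toLp
  have hu := (R.V α).inner_map_map h g
  rw [L2.inner_def, L2.inner_def] at hu
  rw [← integral_const_mul]
  refine Eq.trans (integral_congr_ae ?_) (hu.trans (integral_congr_ae ?_))
  · filter_upwards [R.V_resolvent α hz'] with t ht
    rw [RCLike.inner_apply, ht, cauchyTransform_conj]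
    simp
    ring
  · filter_upwards [hc] with t ht
    rw [RCLike.inner_apply, ht]
    simp
    ring

lemma integral_V_one (α : ℝ) {z : ℂ} (hz : z.im ≠ 0) :
    (1 + (α : ℂ) * cauchyTransform μ z) * cauchyTransform (R.μm α) z = cauchyTransform μ z := by
  have e1 : cauchyTransform (R.μm α) z = ∫ t, ((t : ℂ) - z)⁻¹ * R.V α R.one t ∂(R.μm α) := by
    refine integral_congr_ae ?_
    filter_upwards [R.coeFn_V_one α] with t ht
    rw [ht, mul_one]
  have e2 : cauchyTransform μ z = ∫ t, ((t : ℂ) - z)⁻¹ * R.one t ∂μ := by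
    refine integral_congr_ae ?_
    filter_upwards [R.coeFn_one] with t ht
    rw [ht, mul_one]
  rw [e1, R.aronszajn_krein α hz R.one, e2]

lemma cauchyTransform_eq (hμ : μ ≠ 0) (α : ℝ) {z : ℂ} (hz : z.im ≠ 0) :
    cauchyTransform (R.μm α) z = cauchyTransform μ z / (1 + (α : ℂ) * cauchyTransform μ z) := by
  have hF : (cauchyTransform μ z).im ≠ 0 := by
    rcases hz.lt_or_gt with h | h
    · exact (cauchyTransform_im_neg μ hμ h).ne
    · exact (cauchyTransform_im_pos μ hμ h).ne'
  rw [eq_div_iff (one_add_ofReal_mul_ne_zero hF α), mul_comm]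
  exact R.integral_V_one α hz

end RankOneFamily

/-! ### Cyclicity of the constant function -/

namespace RankOneFamily

variable {μ : Measure ℝ}

lemma exists_bound (R : RankOneFamily μ) : ∃ r : ℝ, 0 < r ∧ ∀ᵐ t ∂μ, |t| ≤ r := by
  obtain ⟨K, hK, hμK⟩ := R.supp
  obtain ⟨r, hr⟩ := hK.isBounded.exists_norm_le
  refine ⟨max r 1, by positivity, ?_⟩
  have : ∀ᵐ t ∂μ, t ∈ K := hμK
  filter_upwards [this] with t ht
  exact (hr t ht).trans (le_max_left _ _)

lemma coeFn_A_zero_pow (R : RankOneFamily μ) (k : ℕ) (g : Lp ℂ 2 μ) :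
    ((R.A 0 ^ k) g : Lp ℂ 2 μ) =ᵐ[μ] fun t => (t : ℂ) ^ k * g t := by
  induction k with
  | zero => simp
  | succ k ih =>
    rw [pow_succ', mul_apply_eq_comp]
    filter_upwards [ih, R.coeFn_A 0 ((R.A 0 ^ k) g)] with t h1 h2
    rw [h2, h1]
    simp
    ring

variable [IsFiniteMeasure μ]

lemma integrable_pow_mul (R : RankOneFamily μ) (k : ℕ) (g : Lp ℂ 2 μ) :
    Integrable (fun t : ℝ => (t : ℂ) ^ k * g t) μ := by
  obtain ⟨r, hr, hb⟩ := R.exists_bound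
  refine ((Lp.memLp g).integrable (by norm_num)).bdd_mul (c := r ^ k) (by fun_prop) ?_
  filter_upwards [hb] with t ht
  rw [norm_pow, norm_real]
  exact pow_le_pow_left₀ (norm_nonneg _) ht k

/-- An element of `L²(μ)` all of whose moments vanish is zero, by Weierstrass approximation. -/
lemma eq_zero_of_moments (R : RankOneFamily μ) (g : Lp ℂ 2 μ) (h : ∀ k : ℕ, ∫ t, (t : ℂ) ^ k * g t ∂μ = 0) : g = 0 := by
  obtain ⟨r, hr, hb⟩ := R.exists_bound
  have hg : Integrable g μ := (Lp.memLp g).integrable (by norm_num)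
  have hpi : ∀ p : Polynomial ℝ, Integrable (fun t => p.eval t • g t) μ ∧
      ∫ t, p.eval t • g t ∂μ = 0 := by
    intro p
    induction p using Polynomial.induction_on' with
    | add p q hp hq =>
      simp only [Polynomial.eval_add, add_smul]
      exact ⟨hp.1.add hq.1, by rw [integral_add hp.1 hq.1, hp.2, hq.2, add_zero]⟩
    | monomial n a =>
      have e : (fun t => (Polynomial.monomial n a).eval t • g t) =
          fun t : ℝ => (a : ℂ) * ((t : ℂ) ^ n * g t) := by
        funext t
        rw [Polynomial.eval_monomial, Complex.real_smul]
        push_cast; ring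
      rw [e]
      exact ⟨(R.integrable_pow_mul n g).const_mul _, by rw [integral_const_mul, h, mul_zero]⟩
  rw [Lp.eq_zero_iff_ae_eq_zero]
  refine ae_eq_zero_of_integral_contDiff_smul_eq_zero hg.locallyIntegrable fun φ hφ hφs => ?_
  have hφi : Integrable (fun t => φ t • g t) μ := by
    obtain ⟨C, hC⟩ := hφ.continuous.bounded_above_of_compact_support hφs
    exact hg.bdd_smul C hφ.continuous.aestronglyMeasurable (ae_of_all _ hC)
  have hle : ∀ ε > 0, ‖∫ t, φ t • g t ∂μ‖ ≤ ε * ∫ t, ‖g t‖ ∂μ := by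
    intro ε hε
    obtain ⟨p, hp⟩ := exists_polynomial_near_of_continuousOn (-r) r φ hφ.continuous.continuousOn ε hε
    have e : ∫ t, φ t • g t ∂μ = ∫ t, (φ t • g t - p.eval t • g t) ∂μ := by
      rw [integral_sub hφi (hpi p).1, (hpi p).2, sub_zero]
    rw [e, ← integral_const_mul]
    refine norm_integral_le_of_norm_le (hg.norm.const_mul ε) ?_
    filter_upwards [hb] with t ht
    rw [← sub_smul, norm_smul]
    refine mul_le_mul_of_nonneg_right ?_ (norm_nonneg _)
    rw [norm_sub_rev]
    exact (hp t (abs_le.mp ht)).le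
  rw [← norm_le_zero_iff]
  have hlim : Tendsto (fun ε : ℝ => ε * ∫ t, ‖g t‖ ∂μ) (𝓝[>] 0) (𝓝 (0 * ∫ t, ‖g t‖ ∂μ)) :=
    (tendsto_id.mono_left nhdsWithin_le_nhds).mul_const _
  rw [zero_mul] at hlim
  exact ge_of_tendsto hlim (eventually_nhdsWithin_of_forall fun ε hε => hle ε hε)

/-- The constant function is cyclic for `M_t`. -/
lemma eq_top_of_invariant (R : RankOneFamily μ) (T : Submodule ℂ (Lp ℂ 2 μ)) (hT : IsClosed (T : Set (Lp ℂ 2 μ)))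
    (h1 : R.one ∈ T) (hA : ∀ g ∈ T, R.A 0 g ∈ T) : T = ⊤ := by
  have : CompleteSpace T := hT.completeSpace_coe
  rw [← Submodule.orthogonal_eq_bot_iff, Submodule.eq_bot_iff]
  intro g hg
  refine R.eq_zero_of_moments g fun k => ?_
  have hk : ∀ k : ℕ, (R.A 0 ^ k) R.one ∈ T := by
    intro k
    induction k with
    | zero => simpa using h1
    | succ k ih => rw [pow_succ']; exact hA _ ih
  have := (Submodule.mem_orthogonal _ _).mp hg _ (hk k)
  rw [L2.inner_def] at this
  rw [← this]
  refine integral_congr_ae ?_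
  filter_upwards [R.coeFn_A_zero_pow k R.one, R.coeFn_one] with t h2 h3
  rw [RCLike.inner_apply, h2, h3]
  simp [mul_comm]

/-- An element of `L²(μ)` whose Cauchy integral vanishes in the upper half-plane is zero: letting
`z = iy → i∞` recovers the moments one after the other. -/
lemma eq_zero_of_cauchy (R : RankOneFamily μ) (g : Lp ℂ 2 μ)
    (h : ∀ z : ℂ, 0 < z.im → ∫ t, ((t : ℂ) - z)⁻¹ * g t ∂μ = 0) : g = 0 := by
  have h_int : ∀ (k : ℕ) (z : ℂ), 0 < z.im →
      Integrable (fun t : ℝ => ((t : ℂ) - z)⁻¹ * ((t : ℂ) ^ k * g t)) μ := fun k z hz =>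
    (R.integrable_pow_mul k g).bdd_mul (c := |z.im|⁻¹) (measurable_resolvent z).aestronglyMeasurable
      (ae_of_all _ fun t => norm_resolvent_le hz.ne' t)
  have hstep : ∀ (k : ℕ) (z : ℂ), 0 < z.im →
      ∫ t, ((t : ℂ) - z)⁻¹ * ((t : ℂ) ^ (k + 1) * g t) ∂μ =
        (∫ t, (t : ℂ) ^ k * g t ∂μ) + z * ∫ t, ((t : ℂ) - z)⁻¹ * ((t : ℂ) ^ k * g t) ∂μ := by
    intro k z hz
    rw [← integral_const_mul, ← integral_add (R.integrable_pow_mul k g) ((h_int k z hz).const_mul z)]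
    refine integral_congr_ae (ae_of_all _ fun t => ?_)
    have := ofReal_sub_ne_zero hz.ne' t
    simp only
    field_simp
    ring
  have key : ∀ k : ℕ, (∀ z : ℂ, 0 < z.im → ∫ t, ((t : ℂ) - z)⁻¹ * ((t : ℂ) ^ k * g t) ∂μ = 0) →
      ∫ t, (t : ℂ) ^ k * g t ∂μ = 0 := by
    intro k hk
    set M := ∫ t, ‖(t : ℂ) ^ (k + 1) * g t‖ ∂μ
    have hle : ∀ y : ℝ, 0 < y → ‖∫ t, (t : ℂ) ^ k * g t ∂μ‖ ≤ y⁻¹ * M := by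
      intro y hy
      have hz : 0 < ((y : ℂ) * I).im := by simpa using hy
      have h1 := hstep k _ hz
      rw [hk _ hz, mul_zero, add_zero] at h1
      rw [← h1, ← integral_const_mul]
      refine norm_integral_le_of_norm_le ((R.integrable_pow_mul (k + 1) g).norm.const_mul _)
        (ae_of_all _ fun t => ?_)
      rw [norm_mul]
      refine mul_le_mul_of_nonneg_right ?_ (norm_nonneg _)
      have := norm_resolvent_le hz.ne' t
      simpa [abs_of_pos hy] using this
    rw [← norm_le_zero_iff]
    have hlim : Tendsto (fun y : ℝ => y⁻¹ * M) atTop (𝓝 (0 * M)) :=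
      tendsto_inv_atTop_zero.mul_const _
    rw [zero_mul] at hlim
    exact ge_of_tendsto hlim ((eventually_gt_atTop 0).mono hle)
  have hall : ∀ k : ℕ, ∀ z : ℂ, 0 < z.im → ∫ t, ((t : ℂ) - z)⁻¹ * ((t : ℂ) ^ k * g t) ∂μ = 0 := by
    intro k
    induction k with
    | zero => intro z hz; simpa using h z hz
    | succ k ih =>
      intro z hz
      rw [hstep k z hz, key k ih, ih z hz, mul_zero, add_zero]
  exact R.eq_zero_of_moments g fun k => key k (hall k)

end RankOneFamily

/-! ### Measurable dependence of the spectral measures on the coupling constant -/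

namespace RankOneFamily

variable {μ : Measure ℝ} (R : RankOneFamily μ)

lemma measure_univ (α : ℝ) : R.μm α univ = ENNReal.ofReal (‖R.one‖ ^ 2) := by
  have h := R.inner_V_one α (R.V α R.one)
  rw [(R.V α).inner_map_map, inner_self_eq_norm_sq_to_K, integral_congr_ae (R.coeFn_V_one α),
    integral_const] at h
  have h2 : (R.μm α).real univ = ‖R.one‖ ^ 2 := by
    have := congrArg Complex.re h
    simp at this
    rw [← this]
    norm_cast
  rw [← h2, ofReal_measureReal]

/-- The spectral measure lives in the ball of radius `‖A α‖ + 1`. -/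
lemma ae_abs_le (α : ℝ) : ∀ᵐ t ∂(R.μm α), |t| ≤ ‖R.A α‖ + 1 := by
  set r := ‖R.A α‖ + 1 with hr
  have hS : MeasurableSet {t : ℝ | r < |t|} := measurableSet_lt measurable_const measurable_norm
  set h : Lp ℂ 2 (R.μm α) := indicatorConstLp 2 hS (measure_ne_top _ _) (1 : ℂ) with hh
  have hc : h =ᵐ[R.μm α] {t : ℝ | r < |t|}.indicator fun _ => (1 : ℂ) := indicatorConstLp_coeFn
  set g := (R.V α).symm h with hg
  have hVg : R.V α g = h := (R.V α).apply_symm_apply h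
  have h1 : r * ‖h‖ ≤ ‖R.V α (R.A α g)‖ := by
    have hr0 : 0 < r := by positivity
    have : ‖h‖ ≤ r⁻¹ * ‖R.V α (R.A α g)‖ := by
      refine Lp.norm_le_mul_norm_of_ae_le_mul ?_
      filter_upwards [R.coeFn_V_A α g, hc] with t ht1 ht2
      rw [ht1, hVg, ht2, norm_mul, norm_real, Real.norm_eq_abs]
      by_cases ht : r < |t|
      · rw [indicator_of_mem (show t ∈ {t : ℝ | r < |t|} from ht), norm_one, mul_one,
          ← div_eq_inv_mul, one_le_div hr0]
        exact ht.le
      · rw [indicator_of_notMem (show t ∉ {t : ℝ | r < |t|} from ht)]; simp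
    calc r * ‖h‖ ≤ r * (r⁻¹ * ‖R.V α (R.A α g)‖) := by gcongr
      _ = _ := by rw [mul_inv_cancel_left₀ hr0.ne']
  rw [(R.V α).norm_map] at h1
  have h2 : ‖R.A α g‖ ≤ ‖R.A α‖ * ‖h‖ := by
    refine ((R.A α).le_opNorm g).trans_eq ?_
    rw [hg, (R.V α).symm.norm_map]
  have h3 : ‖h‖ = 0 := by
    rw [hr] at h1
    nlinarith [norm_nonneg h]
  have h4 : h = 0 := norm_eq_zero.mp h3
  rw [Lp.eq_zero_iff_ae_eq_zero] at h4
  filter_upwards [h4, hc] with t ht1 ht2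
  by_contra ht
  rw [ht2, indicator_of_mem (show t ∈ {t : ℝ | r < |t|} from not_le.mp ht)] at ht1
  simp at ht1

lemma coeFn_V_A_pow (α : ℝ) (k : ℕ) (g : Lp ℂ 2 μ) :
    R.V α ((R.A α ^ k) g) =ᵐ[R.μm α] fun t => (t : ℂ) ^ k * R.V α g t := by
  induction k with
  | zero => simp
  | succ k ih =>
    rw [pow_succ', mul_apply_eq_comp]
    filter_upwards [ih, R.coeFn_V_A α ((R.A α ^ k) g)] with t h1 h2
    rw [h2, h1]
    ring

lemma continuous_A : Continuous R.A := by
  have h : R.A = fun α : ℝ => R.A 0 + (α : ℂ) • (innerSL ℂ R.one).smulRight R.one := by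
    funext α
    ext1 g
    rw [R.A_eq α g, add_apply, smul_apply, ContinuousLinearMap.smulRight_apply, mul_smul]
    rfl
  rw [h]
  fun_prop

lemma integral_pow (α : ℝ) (k : ℕ) :
    ∫ t, t ^ k ∂(R.μm α) = (inner ℂ R.one ((R.A α ^ k) R.one)).re := by
  rw [← (R.V α).inner_map_map, R.inner_V_one]
  have : ∫ t, R.V α ((R.A α ^ k) R.one) t ∂(R.μm α) = ∫ t, ((t ^ k : ℝ) : ℂ) ∂(R.μm α) := by
    refine integral_congr_ae ?_
    filter_upwards [R.coeFn_V_A_pow α k R.one, R.coeFn_V_one α] with t h1 h2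
    rw [h1, h2]
    push_cast
    ring
  rw [this, integral_complex_ofReal, ofReal_re]

lemma integrable_pow (α : ℝ) (k : ℕ) : Integrable (fun t => t ^ k) (R.μm α) := by
  refine Integrable.of_bound (by fun_prop) ((‖R.A α‖ + 1) ^ k) ?_
  filter_upwards [R.ae_abs_le α] with t ht
  rw [norm_pow]
  exact pow_le_pow_left₀ (norm_nonneg _) ht k

lemma continuous_integral_polynomial (p : Polynomial ℝ) :
    (∀ α, Integrable (fun t => p.eval t) (R.μm α)) ∧
      Continuous fun α => ∫ t, p.eval t ∂(R.μm α) := by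
  induction p using Polynomial.induction_on' with
  | add p q hp hq =>
    simp only [Polynomial.eval_add]
    refine ⟨fun α => (hp.1 α).add (hq.1 α), ?_⟩
    simp_rw [integral_add (hp.1 _) (hq.1 _)]
    exact hp.2.add hq.2
  | monomial n a =>
    simp only [Polynomial.eval_monomial]
    refine ⟨fun α => (R.integrable_pow α n).const_mul a, ?_⟩
    simp_rw [integral_const_mul, R.integral_pow]
    have := R.continuous_A
    fun_prop

/-- Integrals of continuous functions are limits of polynomial ones, locally uniformly in `α`. -/
lemma measurable_integral {φ : ℝ → ℝ} (hφ : Continuous φ) {C : ℝ} (hC : ∀ t, ‖φ t‖ ≤ C) :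
    Measurable fun α => ∫ t, φ t ∂(R.μm α) := by
  have hp : ∀ n : ℕ, ∃ p : Polynomial ℝ, ∀ t ∈ Icc (-(n : ℝ)) n, |p.eval t - φ t| < height n :=
    fun n => exists_polynomial_near_of_continuousOn _ _ φ hφ.continuousOn _ (height_pos n)
  choose p hp using hp
  refine measurable_of_tendsto_metrizable (f := fun (n : ℕ) α => ∫ t, (p n).eval t ∂(R.μm α))
    (fun n => (R.continuous_integral_polynomial (p n)).2.measurable) ?_
  rw [tendsto_pi_nhds]
  intro α
  have hφi : Integrable φ (R.μm α) :=
    Integrable.of_bound hφ.aestronglyMeasurable C (ae_of_all _ hC)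
  rw [tendsto_iff_norm_sub_tendsto_zero]
  have hlim : Tendsto (fun n => height n * (R.μm α).real univ) atTop
      (𝓝 (0 * (R.μm α).real univ)) :=
    (tendsto_height.mono_right nhdsWithin_le_nhds).mul_const _
  rw [zero_mul] at hlim
  refine squeeze_zero' (Eventually.of_forall fun n => norm_nonneg _) ?_ hlim
  filter_upwards [tendsto_natCast_atTop_atTop.eventually_ge_atTop (‖R.A α‖ + 1)] with n hn
  rw [← integral_sub ((R.continuous_integral_polynomial (p n)).1 α) hφi]
  refine norm_integral_le_of_norm_le_const ?_
  filter_upwards [R.ae_abs_le α] with t ht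
  exact (hp n t (abs_le.mp (ht.trans hn))).le

lemma measurable_μm : Measurable R.μm := by
  refine Measurable.measure_of_isPiSystem (S := {s : Set ℝ | IsClosed s})
    (by rw [BorelSpace.measurable_eq (α := ℝ), borel_eq_generateFrom_isClosed])
    isPiSystem_isClosed (fun s hs => ?_) (by simp_rw [R.measure_univ]; exact measurable_const)
  have hs : IsClosed s := hs
  refine measurable_of_tendsto_metrizable
    (f := fun (n : ℕ) α => ∫⁻ t, (hs.apprSeq n t : ℝ≥0∞) ∂(R.μm α)) (fun n => ?_)
    (tendsto_pi_nhds.mpr fun α => HasOuterApproxClosed.tendsto_lintegral_apprSeq hs (R.μm α))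
  have hc : Continuous fun t => (hs.apprSeq n t : ℝ) :=
    NNReal.continuous_coe.comp (hs.apprSeq n).continuous
  have hb : ∀ t, ‖(hs.apprSeq n t : ℝ)‖ ≤ 1 := by
    intro t
    have := HasOuterApproxClosed.apprSeq_apply_le_one hs n t
    rw [Real.norm_of_nonneg (NNReal.coe_nonneg _)]
    exact_mod_cast this
  have := (R.measurable_integral hc hb).ennreal_ofReal
  convert this using 2 with α
  rw [ofReal_integral_eq_lintegral_ofReal
    (Integrable.of_bound hc.aestronglyMeasurable 1 (ae_of_all _ hb))
    (ae_of_all _ fun t => NNReal.coe_nonneg _)]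
  simp

/-- The family `α ↦ μ_α` as a finite kernel. -/
noncomputable def kernel : Kernel ℝ ℝ := ⟨R.μm, R.measurable_μm⟩

@[simp]
lemma kernel_apply (α : ℝ) : R.kernel α = R.μm α := rfl

instance : IsFiniteKernel R.kernel :=
  ⟨ENNReal.ofReal (‖R.one‖ ^ 2), ENNReal.ofReal_lt_top, fun α => by
    rw [R.kernel_apply, R.measure_univ]⟩

end RankOneFamily

/-! ### Jointly measurable versions of the transformed vectors -/

/-- Convergence in `L²` of a finite measure at a geometric rate implies convergence almost
everywhere. -/
lemma ae_tendsto_of_geometric {m : Measure ℝ} [IsFiniteMeasure m] (u : ℕ → Lp ℂ 2 m) (w : Lp ℂ 2 m)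
    (h : ∀ n, ‖u n - w‖ₑ ≤ (2⁻¹ : ℝ≥0∞) ^ n) :
    ∀ᵐ t ∂m, Tendsto (fun n => u n t) atTop (𝓝 (w t)) := by
  set K : ℝ≥0∞ := m univ ^ (1 / (1 : ℝ≥0∞).toReal - 1 / (2 : ℝ≥0∞).toReal) with hK
  have hKtop : K ≠ ∞ := ENNReal.rpow_ne_top_of_nonneg (by norm_num) (measure_ne_top _ _)
  have hm : ∀ n, AEStronglyMeasurable (fun t => u n t - w t) m := fun n =>
    (Lp.aestronglyMeasurable _).sub (Lp.aestronglyMeasurable _)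
  have h1 : ∀ n, ∫⁻ t, ‖u n t - w t‖ₑ ∂m ≤ (2⁻¹ : ℝ≥0∞) ^ n * K := by
    intro n
    rw [← eLpNorm_one_eq_lintegral_enorm]
    refine (eLpNorm_le_eLpNorm_mul_rpow_measure_univ (q := 2) (by norm_num) (hm n)).trans ?_
    refine mul_le_mul_left ?_ _
    refine le_trans (le_of_eq ?_) (h n)
    rw [Lp.enorm_def]
    exact eLpNorm_congr_ae (Lp.coeFn_sub _ _).symm
  have h2 : ∫⁻ t, ∑' n, ‖u n t - w t‖ₑ ∂m ≠ ∞ := by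
    rw [lintegral_tsum fun n => (hm n).enorm]
    refine ne_top_of_le_ne_top ?_ (ENNReal.tsum_le_tsum h1)
    rw [ENNReal.tsum_mul_right, ENNReal.tsum_geometric]
    refine ENNReal.mul_ne_top ?_ hKtop
    simp
  filter_upwards [ae_lt_top' (AEMeasurable.tsum fun n => (hm n).enorm) h2] with t ht
  have := ENNReal.tendsto_atTop_zero_of_tsum_ne_top ht.ne
  rw [tendsto_iff_edist_tendsto_0]
  simpa [edist_eq_enorm_sub] using this

namespace RankOneFamily

variable {μ : Measure ℝ} (R : RankOneFamily μ)

/-- The vectors `g` for which `(α, t) ↦ (V α g) t` has a jointly measurable version. -/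
def goodSubmodule : Submodule ℂ (Lp ℂ 2 μ) where
  carrier := {g | ∃ P : ℝ × ℝ → ℂ, Measurable P ∧ ∀ α, R.V α g =ᵐ[R.μm α] fun t => P (α, t)}
  zero_mem' := ⟨0, measurable_zero, fun α => by
    rw [map_zero]; exact Lp.coeFn_zero _ _ _⟩
  add_mem' := by
    rintro g h ⟨P, hP, hPg⟩ ⟨Q, hQ, hQh⟩
    refine ⟨P + Q, hP.add hQ, fun α => ?_⟩
    rw [map_add]
    filter_upwards [Lp.coeFn_add (R.V α g) (R.V α h), hPg α, hQh α] with t h1 h2 h3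
    rw [h1, Pi.add_apply, h2, h3, Pi.add_apply]
  smul_mem' := by
    rintro c g ⟨P, hP, hPg⟩
    refine ⟨c • P, hP.const_smul c, fun α => ?_⟩
    rw [map_smul]
    filter_upwards [Lp.coeFn_smul c (R.V α g), hPg α] with t h1 h2
    rw [h1, Pi.smul_apply, h2, Pi.smul_apply]

lemma isClosed_goodSubmodule : IsClosed (R.goodSubmodule : Set (Lp ℂ 2 μ)) := by
  refine isClosed_of_closure_subset fun g hg => ?_
  have h1 : ∀ n : ℕ, ∃ h ∈ R.goodSubmodule, edist g h < (2⁻¹ : ℝ≥0∞) ^ n := fun n =>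
    EMetric.mem_closure_iff.mp hg _ (by
      refine pos_iff_ne_zero.mpr (pow_ne_zero n ?_)
      simp)
  choose h hmem hdist using h1
  choose P hP hPh using hmem
  refine ⟨fun x => limUnder atTop fun n => P n x,
    (StronglyMeasurable.limUnder fun n => (hP n).stronglyMeasurable).measurable, fun α => ?_⟩
  have h2 := ae_tendsto_of_geometric (fun n => R.V α (h n)) (R.V α g) fun n => by
    rw [← edist_eq_enorm_sub, (R.V α).edist_map, edist_comm]
    exact (hdist n).le
  have h3 : ∀ᵐ t ∂(R.μm α), ∀ n, R.V α (h n) t = P n (α, t) := ae_all_iff.mpr fun n => hPh n α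
  filter_upwards [h2, h3] with t ht1 ht2
  simp_rw [ht2] at ht1
  exact ht1.limUnder_eq.symm

variable [IsFiniteMeasure μ]

lemma exists_jointly_measurable (g : Lp ℂ 2 μ) :
    ∃ P : ℝ × ℝ → ℂ, Measurable P ∧ ∀ α, R.V α g =ᵐ[R.μm α] fun t => P (α, t) := by
  have htop : R.goodSubmodule = ⊤ := by
    refine R.eq_top_of_invariant _ R.isClosed_goodSubmodule
      ⟨fun _ => 1, measurable_const, R.coeFn_V_one⟩ ?_
    rintro g ⟨P, hP, hPg⟩
    refine ⟨fun x => x.2 * P x - (x.1 : ℂ) * inner ℂ R.one g, by fun_prop, fun α => ?_⟩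
    have h0 := R.coeFn_V_A α g
    rw [R.A_eq α g, map_add, map_smul] at h0
    filter_upwards [h0, hPg α, R.coeFn_V_one α,
      Lp.coeFn_add (R.V α (R.A 0 g)) (((α : ℂ) * inner ℂ R.one g) • R.V α R.one),
      Lp.coeFn_smul ((α : ℂ) * inner ℂ R.one g) (R.V α R.one)] with t h1 h2 h3 h4 h5
    rw [h4, Pi.add_apply, h5, Pi.smul_apply, h3, h2] at h1
    simp only [smul_eq_mul] at h1
    linear_combination h1
  have : g ∈ R.goodSubmodule := htop ▸ Submodule.mem_top
  exact this

end RankOneFamily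

/-! ### The joint measure -/

/-- The finite measure `dα / (1 + α²)` on the coupling constants. -/
noncomputable def couplingMeasure : Measure ℝ :=
  volume.withDensity fun α => ENNReal.ofReal ((1 + α ^ 2)⁻¹)

instance : IsFiniteMeasure couplingMeasure :=
  isFiniteMeasure_withDensity_ofReal integrable_inv_one_add_sq.2

lemma measurable_couplingDensity : Measurable fun α : ℝ => ENNReal.ofReal ((1 + α ^ 2)⁻¹) := by
  fun_prop

lemma couplingMeasure_le : couplingMeasure ≤ volume := by
  rw [couplingMeasure]
  refine (withDensity_mono (g := 1) (ae_of_all _ fun α => ?_)).trans_eq withDensity_one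
  rw [Pi.one_apply, ENNReal.ofReal_le_one]
  refine inv_le_one_of_one_le₀ ?_
  nlinarith [sq_nonneg α]

lemma volume_absolutelyContinuous_couplingMeasure : (volume : Measure ℝ) ≪ couplingMeasure := by
  refine withDensity_absolutelyContinuous' measurable_couplingDensity.aemeasurable
    (ae_of_all _ fun α => ?_)
  have : (0 : ℝ) < (1 + α ^ 2)⁻¹ := by positivity
  simpa using this

lemma integral_couplingMeasure (φ : ℝ → ℂ) :
    ∫ α, φ α ∂couplingMeasure = ∫ α : ℝ, (((1 + α ^ 2)⁻¹ : ℝ) : ℂ) * φ α := by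
  rw [couplingMeasure, integral_withDensity_eq_integral_toReal_smul measurable_couplingDensity
    (ae_of_all _ fun _ => ENNReal.ofReal_lt_top)]
  refine integral_congr_ae (ae_of_all _ fun α => ?_)
  simp only
  rw [ENNReal.toReal_ofReal (by positivity), Complex.real_smul]

/-- The unimodular factor relating `1 / (1 + α²)` and the holomorphic weight. -/
noncomputable def phase (α : ℝ) : ℂ := ((α : ℂ) - I) / ((α : ℂ) + I)

lemma measurable_phase : Measurable phase := by unfold phase; fun_prop

lemma norm_phase (α : ℝ) : ‖phase α‖ = 1 := by
  have h : ‖(α : ℂ) - I‖ = ‖(α : ℂ) + I‖ := by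
    rw [← Complex.norm_conj]
    simp
  rw [phase, norm_div, h, div_self (norm_ne_zero_iff.mpr (ofReal_add_I_ne_zero α))]

lemma weight_mul_phase (α : ℝ) : (((1 + α ^ 2)⁻¹ : ℝ) : ℂ) * phase α = couplingWeight α := by
  have h5 : (1 + (α : ℂ) ^ 2) = ((α : ℂ) - I) * ((α : ℂ) + I) := by
    ring_nf; rw [I_sq]; ring
  have h1 := ofReal_add_I_ne_zero α
  have h2 : (α : ℂ) - I ≠ 0 := ofReal_sub_ne_zero (by simp) α
  rw [phase, couplingWeight]
  push_cast
  rw [h5]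
  field_simp

namespace RankOneFamily

variable {μ : Measure ℝ} (R : RankOneFamily μ)

/-- The measure `dα / (1 + α²) · dμ_α(t)` on pairs `(α, t)`. -/
noncomputable def jointMeasure : Measure (ℝ × ℝ) := couplingMeasure ⊗ₘ R.kernel

instance : IsFiniteMeasure R.jointMeasure := by unfold jointMeasure; infer_instance

lemma lintegral_enorm_sq {g : Lp ℂ 2 μ} {P : ℝ × ℝ → ℂ}
    (hPg : ∀ α, R.V α g =ᵐ[R.μm α] fun t => P (α, t)) (α : ℝ) :
    ∫⁻ t, ‖P (α, t)‖ₑ ^ (2 : ℝ) ∂(R.μm α) = ‖g‖ₑ ^ (2 : ℝ) := by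
  have h1 : ∫⁻ t, ‖P (α, t)‖ₑ ^ (2 : ℝ) ∂(R.μm α) = ∫⁻ t, ‖R.V α g t‖ₑ ^ (2 : ℝ) ∂(R.μm α) := by
    refine lintegral_congr_ae ?_
    filter_upwards [hPg α] with t ht
    rw [ht]
  have h2 : ‖R.V α g‖ₑ = ‖g‖ₑ := (R.V α).enorm_map g
  rw [h1, ← h2, Lp.enorm_def,
    eLpNorm_eq_lintegral_rpow_enorm_toReal (by norm_num) (by norm_num), ENNReal.toReal_ofNat,
    ← ENNReal.rpow_mul, one_div, inv_mul_cancel₀ (by norm_num), ENNReal.rpow_one]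

lemma memLp_joint {g : Lp ℂ 2 μ} {P : ℝ × ℝ → ℂ} (hP : Measurable P)
    (hPg : ∀ α, R.V α g =ᵐ[R.μm α] fun t => P (α, t)) :
    MemLp (fun x => phase x.1 * P x) 2 R.jointMeasure := by
  have h0 : Measurable fun x : ℝ × ℝ => phase x.1 := measurable_phase.comp measurable_fst
  have h1 : eLpNorm P 2 R.jointMeasure < ∞ := by
    rw [eLpNorm_lt_top_iff_lintegral_rpow_enorm_lt_top (by norm_num) (by norm_num),
      ENNReal.toReal_ofNat, jointMeasure, Measure.lintegral_compProd (by fun_prop)]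
    simp_rw [R.kernel_apply, R.lintegral_enorm_sq hPg]
    rw [lintegral_const]
    exact ENNReal.mul_lt_top (ENNReal.rpow_lt_top_of_nonneg (by norm_num) enorm_ne_top)
      (measure_lt_top _ _)
  have h2 : MemLp P 2 R.jointMeasure := ⟨hP.aestronglyMeasurable, h1⟩
  have h3 : ∀ x : ℝ × ℝ, ‖phase x.1‖ ≤ 1 := fun x => (norm_phase x.1).le
  exact memLp_bdd_mul _ h0 1 h3 h2

variable [IsFiniteMeasure μ]

/-- The Cauchy integral of `phase · V f` against the joint measure factors into the Cauchy integral
of `f` and a scalar integral over the coupling constant. -/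
lemma integral_joint (hμ : μ ≠ 0) {g : Lp ℂ 2 μ} {P : ℝ × ℝ → ℂ} (hP : Measurable P)
    (hPg : ∀ α, R.V α g =ᵐ[R.μm α] fun t => P (α, t)) {z : ℂ} (hz : z.im ≠ 0) :
    ∫ x, ((x.2 : ℂ) - z)⁻¹ * (phase x.1 * P x) ∂(R.jointMeasure) =
      (∫ t, ((t : ℂ) - z)⁻¹ * g t ∂μ) *
        ∫ α : ℝ, couplingWeight α * (1 + (α : ℂ) * cauchyTransform μ z)⁻¹ := by
  have hF : (cauchyTransform μ z).im ≠ 0 := by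
    rcases hz.lt_or_gt with h | h
    · exact (cauchyTransform_im_neg μ hμ h).ne
    · exact (cauchyTransform_im_pos μ hμ h).ne'
  have hi : Integrable (fun x : ℝ × ℝ => ((x.2 : ℂ) - z)⁻¹ * (phase x.1 * P x)) R.jointMeasure :=
    ((R.memLp_joint hP hPg).integrable (by norm_num)).bdd_mul (c := |z.im|⁻¹)
      (by fun_prop) (ae_of_all _ fun x => norm_resolvent_le hz x.2)
  rw [jointMeasure, Measure.integral_compProd hi, integral_couplingMeasure, ← integral_const_mul]
  refine integral_congr_ae (ae_of_all _ fun α => ?_)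
  have h0 := one_add_ofReal_mul_ne_zero hF α
  have h1 : ∫ t, ((t : ℂ) - z)⁻¹ * (phase α * P (α, t)) ∂(R.kernel α) =
      phase α * ∫ t, ((t : ℂ) - z)⁻¹ * R.V α g t ∂(R.μm α) := by
    rw [← integral_const_mul, R.kernel_apply]
    refine integral_congr_ae ?_
    filter_upwards [hPg α] with t ht
    rw [ht]
    ring
  simp only
  rw [h1, ← R.aronszajn_krein α hz g, ← weight_mul_phase]
  field_simp

/-- The averaged measure `∫ μ_α dα / (1 + α²)` is absolutely continuous. -/
lemma joint_absolutelyContinuous (hμ : μ ≠ 0) : R.jointMeasure.map Prod.snd ≪ volume := by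
  refine absolutelyContinuous_of_closedBall_le _ (C := ENNReal.ofReal Real.pi)
    ENNReal.ofReal_ne_top fun x r hr => ?_
  have hz : 0 < ((x : ℂ) + r * I).im := by simpa using hr
  have hms : MeasurableSet (Metric.closedBall x r) := measurableSet_closedBall
  rw [Measure.map_apply measurable_snd hms, jointMeasure,
    Measure.compProd_apply (measurable_snd hms)]
  calc ∫⁻ α, R.kernel α (Prod.mk α ⁻¹' (Prod.snd ⁻¹' Metric.closedBall x r)) ∂couplingMeasure
      ≤ ∫⁻ α, R.kernel α (Prod.mk α ⁻¹' (Prod.snd ⁻¹' Metric.closedBall x r)) :=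
        lintegral_mono' couplingMeasure_le le_rfl
    _ ≤ ∫⁻ α : ℝ, ENNReal.ofReal (2 * r) * ENNReal.ofReal ((cauchyTransform μ ((x : ℂ) + r * I) /
          (1 + (α : ℂ) * cauchyTransform μ ((x : ℂ) + r * I))).im) := by
        refine lintegral_mono fun α => ?_
        rw [← R.cauchyTransform_eq hμ α hz.ne', ← ENNReal.ofReal_mul (by positivity)]
        have := ENNReal.ofReal_le_ofReal (measure_closedBall_le (R.μm α) x hr)
        rwa [ofReal_measureReal] at this
    _ = ENNReal.ofReal Real.pi * volume (Metric.closedBall x r) := by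
        rw [lintegral_const_mul' _ _ ENNReal.ofReal_ne_top,
          lintegral_im_div_one_add (cauchyTransform_im_pos μ hμ hz), Real.volume_closedBall,
          mul_comm]

end RankOneFamily

/-! ### The zero set on the singular part -/

namespace RankOneFamily

variable {μ : Measure ℝ}

/-- The boundary behaviour along vertical approach: `μ_α`-almost everywhere, if the Cauchy
transform of `μ` has a real nonzero limit `a`, then `α = -1 / a`. -/
lemma ae_eq_neg_inv [IsFiniteMeasure μ] (R : RankOneFamily μ) (hμ : μ ≠ 0) (α : ℝ) :
    ∀ᵐ t : ℝ ∂(R.μm α), ∀ a : ℝ, a ≠ 0 →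
      Tendsto (fun n => cauchyTransform μ ((t : ℂ) + height n * I)) atTop (𝓝 (a : ℂ)) →
      -a⁻¹ = α := by
  filter_upwards [ae_not_tendsto_im_zero (R.μm α)] with t ht a ha hlim
  by_contra hne
  apply ht
  have h0 : (1 + α * a : ℝ) ≠ 0 := by
    intro h
    apply hne
    field_simp
    linarith
  have h1 : (1 + (α : ℂ) * a) ≠ 0 := by exact_mod_cast h0
  have h2 : Tendsto (fun n => cauchyTransform (R.μm α) ((t : ℂ) + height n * I)) atTop
      (𝓝 ((a : ℂ) / (1 + (α : ℂ) * a))) := by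
    refine (hlim.div ((hlim.const_mul (α : ℂ)).const_add 1) h1).congr fun n => ?_
    have hz : ((t : ℂ) + height n * I).im ≠ 0 := by simpa using (height_pos n).ne'
    simp only [Pi.div_apply]
    rw [R.cauchyTransform_eq hμ α hz]
  have h3 := (continuous_im.tendsto _).comp h2
  have h4 : ((a : ℂ) / (1 + (α : ℂ) * a)).im = 0 := by
    have : (a : ℂ) / (1 + (α : ℂ) * a) = ((a / (1 + α * a) : ℝ) : ℂ) := by push_cast; ring
    rw [this, ofReal_im]
  rwa [h4] at h3

/-- On the singular part of `μ_α`, the Cauchy transform of `μ` tends to `-1 / α`. -/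
lemma ae_singular_tendsto [IsFiniteMeasure μ] (R : RankOneFamily μ) (hμ : μ ≠ 0) {α : ℝ}
    (hα : α ≠ 0) :
    ∀ᵐ t : ℝ ∂((R.μm α).singularPart volume),
      Tendsto (fun n => cauchyTransform μ ((t : ℂ) + height n * I)) atTop
        (𝓝 ((-α⁻¹ : ℝ) : ℂ)) := by
  filter_upwards [singular_tendsto_im (R.μm α)] with t ht
  have hz : ∀ n, 0 < ((t : ℂ) + height n * I).im := fun n => by simpa using height_pos n
  set w : ℕ → ℂ := fun n => cauchyTransform (R.μm α) ((t : ℂ) + height n * I) with hw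
  have hwinv : Tendsto (fun n => (w n)⁻¹) atTop (𝓝 0) := by
    rw [tendsto_zero_iff_norm_tendsto_zero]
    have h1 : Tendsto (fun n => ‖w n‖) atTop atTop :=
      tendsto_atTop_mono (fun n => (le_abs_self _).trans (abs_im_le_norm _)) ht
    refine h1.inv_tendsto_atTop.congr fun n => ?_
    simp
  have hαc : (0 : ℂ) - (α : ℂ) ≠ 0 := by simpa using hα
  have h2 := (hwinv.sub_const (α : ℂ)).inv₀ hαc
  have e : ((-α⁻¹ : ℝ) : ℂ) = ((0 : ℂ) - (α : ℂ))⁻¹ := by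
    push_cast
    rw [zero_sub, inv_neg]
  rw [e]
  refine h2.congr fun n => ?_
  have hF := cauchyTransform_im_pos μ hμ (hz n)
  have hF0 : cauchyTransform μ ((t : ℂ) + height n * I) ≠ 0 := fun h => by simp [h] at hF
  have h3 := one_add_ofReal_mul_ne_zero hF.ne' α
  rw [hw]
  simp only
  rw [R.cauchyTransform_eq hμ α (hz n).ne', inv_div, add_div, mul_div_cancel_right₀ _ hF0,
    add_sub_cancel_right, one_div, inv_inv]

variable [IsFiniteMeasure μ]

lemma measurable_cauchyTransform_vertical (n : ℕ) :
    Measurable fun t : ℝ => cauchyTransform μ ((t : ℂ) + height n * I) := by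
  unfold cauchyTransform
  have : StronglyMeasurable (Function.uncurry fun t s : ℝ => ((s : ℂ) - ((t : ℂ) + height n * I))⁻¹) := by
    refine Measurable.stronglyMeasurable ?_
    unfold Function.uncurry
    fun_prop
  exact this.integral_prod_right.measurable

/-- Let `E` be the set of points where the Cauchy transform of `μ` has a real boundary value
`a ≠ 0` and `V_{-1/a} f` vanishes. By the uniqueness theorem `E` is a Lebesgue null set, hence a
null set of `μ_α` for almost every `α`, while it carries the zero set of `V_α f` up to a null set of
the singular part of `μ_α`. -/
theorem volume_bad_eq_zero (R : RankOneFamily μ) {f : Lp ℂ 2 μ} (hf : f ≠ 0) :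
    volume {α : ℝ |
      0 < ((R.μm α).singularPart volume) {t : ℝ | (R.V α f : ℝ → ℂ) t = 0}} = 0 := by
  have hμ : μ ≠ 0 := by
    rintro rfl
    apply hf
    rw [Lp.eq_zero_iff_ae_eq_zero, Filter.EventuallyEq, ae_zero]
    exact eventually_bot
  obtain ⟨P, hP, hPf⟩ := R.exists_jointly_measurable f
  set F : ℕ → ℝ → ℂ := fun n t => cauchyTransform μ ((t : ℂ) + height n * I) with hF
  have hFm : ∀ n, Measurable (F n) := measurable_cauchyTransform_vertical
  set a : ℝ → ℝ := fun t => (limUnder atTop fun n => F n t).re with ha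
  have ham : Measurable a := measurable_re.comp
    (StronglyMeasurable.limUnder fun n => (hFm n).stronglyMeasurable).measurable
  set E : Set ℝ := {t | Tendsto (fun n => F n t) atTop (𝓝 (a t : ℂ))} ∩
    {t | a t ≠ 0} ∩ {t | P (-(a t)⁻¹, t) = 0} with hE
  have hEm : MeasurableSet E := by
    refine ((measurableSet_tendsto_fun hFm (measurable_ofReal.comp ham)).inter
      (ham (measurableSet_singleton 0).compl)).inter ?_
    have : Measurable fun t => P (-(a t)⁻¹, t) := by fun_prop
    exact this (measurableSet_singleton 0)
  have hPE : ∀ α, ∀ᵐ t ∂(R.μm α), t ∈ E → P (α, t) = 0 := by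
    intro α
    filter_upwards [R.ae_eq_neg_inv hμ α] with t ht htE
    have h1 := ht (a t) htE.1.2 htE.1.1
    have h2 : P (-(a t)⁻¹, t) = 0 := htE.2
    rwa [h1] at h2
  -- If `E` had positive length, the Cauchy integral of `f` would vanish in the upper half-plane.
  have hvolE : volume E = 0 := by
    by_contra hvol
    apply hf
    refine R.eq_zero_of_cauchy f fun z hz => ?_
    have hvE : ∀ᵐ x ∂(R.jointMeasure), x.2 ∈ E → phase x.1 * P x = 0 := by
      have hms : MeasurableSet {x : ℝ × ℝ | x.2 ∈ E → phase x.1 * P x = 0} := by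
        have h1 : MeasurableSet {x : ℝ × ℝ | x.2 ∈ E} := measurable_snd hEm
        have h2 : Measurable fun x : ℝ × ℝ => phase x.1 * P x :=
          (measurable_phase.comp measurable_fst).mul hP
        exact h1.imp (h2 (measurableSet_singleton 0))
      rw [jointMeasure, Measure.ae_compProd_iff hms]
      refine ae_of_all _ fun α => ?_
      rw [R.kernel_apply]
      filter_upwards [hPE α] with t ht htE
      rw [ht htE, mul_zero]
    have h1 := hardy_uniqueness measurable_snd (R.memLp_joint hP hPf) hEm hvol hvE
      (fun ζ hζ => by
        rw [R.integral_joint hμ hP hPf hζ.ne,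
          integral_couplingWeight_lower (cauchyTransform_im_neg μ hμ hζ), mul_zero]) hz
    rw [R.integral_joint hμ hP hPf hz.ne'] at h1
    exact (mul_eq_zero.mp h1).resolve_right
      (integral_couplingWeight_upper_ne_zero (cauchyTransform_im_pos μ hμ hz))
  have hae : ∀ᵐ α : ℝ, R.μm α E = 0 := by
    refine volume_absolutelyContinuous_couplingMeasure.ae_le ?_
    have h1 := R.joint_absolutelyContinuous hμ hvolE
    rw [Measure.map_apply measurable_snd hEm, jointMeasure] at h1
    filter_upwards [Measure.ae_ae_of_ae_compProd (measure_eq_zero_iff_ae_notMem.mp h1)]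
      with α hα
    rw [R.kernel_apply] at hα
    exact measure_eq_zero_iff_ae_notMem.mpr hα
  have hae0 : ∀ᵐ α : ℝ, α ≠ 0 := by
    have : volume ({0} : Set ℝ) = 0 := by simp
    exact compl_mem_ae_iff.mpr this
  have hgood : ∀ᵐ α : ℝ,
      ((R.μm α).singularPart volume) {t : ℝ | (R.V α f : ℝ → ℂ) t = 0} = 0 := by
    filter_upwards [hae, hae0] with α hα hα0
    have hle : (R.μm α).singularPart volume ≤ R.μm α := Measure.singularPart_le _ _
    have h1 : ((R.μm α).singularPart volume) E = 0 :=
      le_antisymm ((hle E).trans hα.le) bot_le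
    have h2 : ∀ᵐ t ∂((R.μm α).singularPart volume), t ∉ E := measure_eq_zero_iff_ae_notMem.mp h1
    refine measure_eq_zero_iff_ae_notMem.mpr ?_
    filter_upwards [h2, R.ae_singular_tendsto hμ hα0, ae_mono hle (hPf α)] with t ht1 ht2 ht3 ht4
    have hat : a t = -α⁻¹ := by
      rw [ha]
      simp only
      rw [ht2.limUnder_eq, ofReal_re]
    refine ht1 ⟨⟨?_, ?_⟩, ?_⟩
    · simp only [mem_ofPred_eq]
      rw [hat]
      exact ht2
    · simpa [hat] using hα0
    · have ht5 : R.V α f t = 0 := ht4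
      simp only [mem_ofPred_eq]
      rw [hat, inv_neg, inv_inv, neg_neg, ← ht3, ht5]
  refine measure_mono_null ?_ (ae_iff.mp hgood)
  intro α hα
  have h : 0 < ((R.μm α).singularPart volume) {t : ℝ | (R.V α f : ℝ → ℂ) t = 0} := hα
  exact h.ne'

end RankOneFamily

end Auxiliary

/-- **Theorem (rank-one perturbations, singular part).**
For any `0 ≠ f ∈ L²(μ)`, the set of `α ∈ ℝ` for which `V α f` vanishes on a set
of positive `(μ_α)_s`-measure has Lebesgue measure zero. -/
theorem cyclic_singular_part_ae_alpha
{μ : Measure ℝ} [IsFiniteMeasure μ]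
    (hsupp : ∃ K : Set ℝ, IsCompact K ∧ μ Kᶜ = 0)
    (one : Lp ℂ 2 μ) (hone : (one : ℝ → ℂ) =ᵐ[μ] fun _ => 1)
    (A : ℝ → (Lp ℂ 2 μ →L[ℂ] Lp ℂ 2 μ))
    (hA : ∀ (α : ℝ) (g : Lp ℂ 2 μ),
      (A α g : ℝ → ℂ) =ᵐ[μ] fun t => t * g t + (α : ℂ) * ⟪one, g⟫)
    (μm : ℝ → Measure ℝ)
    (hμm_fin : ∀ α, IsFiniteMeasure (μm α))
    (hμm0 : μm 0 = μ)
    (hres : ∀ (α : ℝ) (z : ℂ), z.im ≠ 0 → ∀ g : Lp ℂ 2 μ,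
      A α g - z • g = one → ⟪one, g⟫ = ∫ t, ((t : ℂ) - z)⁻¹ ∂(μm α))
    (V : ∀ α : ℝ, Lp ℂ 2 μ ≃ₗᵢ[ℂ] Lp ℂ 2 (μm α))
    (hV : ∀ (α : ℝ) (g : Lp ℂ 2 μ),
      (V α (A α g) : ℝ → ℂ) =ᵐ[μm α] fun t => t * (V α g) t)
    (hV1 : ∀ α : ℝ, (V α one : ℝ → ℂ) =ᵐ[μm α] fun _ => 1)
    (f : Lp ℂ 2 μ) (hf : f ≠ 0) :
    volume {α : ℝ |
      0 < ((μm α).singularPart volume) {t : ℝ | (V α f : ℝ → ℂ) t = 0}} = 0 := by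
  exact RankOneFamily.volume_bad_eq_zero
    ⟨hsupp, one, hone, A, hA, μm, hμm_fin, V, hV, hV1⟩ hf
end

section
/- (Aronszajn–Krein-type formula, second identity.) For every f ∈ L²(μ), every α ∈ ℝ, and every z ∈ ℂ∖ℝ, one has 𝒦_{f_α μ_α}(z)·𝒦_{μ}(z) = 𝒦_{f μ}(z)·𝒦_{μ_α}(z), where f_α = V_α f; equivalently, the normalized Cauchy transform 𝒦_{f_α μ_α}/𝒦_{μ_α} is independent of α and equals 𝒦_{fμ}/𝒦_{μ} on ℂ∖ℝ. -/
/-!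
Put `w = conj z`. The value `𝒦_{f_α μ_α}(z)` is the inner product in `L²(μ_α)` of the Cauchy kernel
`(t - w)⁻¹` with `V_α f`. Since `V_α` is unitary, this is `⟪g, f⟫` with `g = V_α⁻¹ (t - w)⁻¹`.
As `V_α` intertwines `A_α` with multiplication by `t` and fixes `1`, the vector `g` solves
`(A_α - w) g = 1`, that is `(t - w) g = 1 - α ⟪1, g⟫` almost everywhere. So `g` is a scalar
multiple of `(t - w)⁻¹` in `L²(μ)`, and hence `𝒦_{f_α μ_α}(z) = k 𝒦_{fμ}(z)` with a constant `k` that does not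
depend on `f`. The case `f = 1` reads `𝒦_{μ_α}(z) = k 𝒦_μ(z)`; eliminating `k` gives the identity.
-/

open MeasureTheory Complex Set

local notation "⟪" x ", " y "⟫" => @inner ℂ _ _ x y

lemma ofReal_sub_ne_zero_of_im_ne_zero {w : ℂ} (hw : w.im ≠ 0) (t : ℝ) : (t : ℂ) - w ≠ 0 := by
  intro h
  apply hw
  have := congrArg Complex.im h
  simpa using this

lemma memLp_cauchyKernel (ν : Measure ℝ) [IsFiniteMeasure ν] {w : ℂ} (hw : w.im ≠ 0) :
    MemLp (fun t : ℝ => ((t : ℂ) - w)⁻¹) 2 ν := by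
  refine MemLp.of_bound (C := |w.im|⁻¹) ?_ (.of_forall fun t => ?_)
  · exact (by fun_prop : Measurable fun t : ℝ => ((t : ℂ) - w)⁻¹).aestronglyMeasurable
  · rw [norm_inv]
    refine inv_anti₀ (abs_pos.mpr hw) ?_
    simpa using Complex.abs_im_le_norm ((t : ℂ) - w)

/-- A Cauchy transform at `z` is the inner product against the kernel at the conjugate point; the
scalar `c` accommodates multiples of the kernel. -/
lemma inner_eq_cauchy (ν : Measure ℝ) (z c : ℂ) (g f : Lp ℂ 2 ν)
    (hg : (g : ℝ → ℂ) =ᵐ[ν] fun t => c * ((t : ℂ) - (starRingEnd ℂ) z)⁻¹) :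
    ⟪g, f⟫ = (starRingEnd ℂ) c * ∫ t, (f : ℝ → ℂ) t * ((t : ℂ) - z)⁻¹ ∂ν := by
  rw [L2.inner_def, ← integral_const_mul]
  refine integral_congr_ae ?_
  filter_upwards [hg] with t ht
  rw [RCLike.inner_apply, ht]
  simp
  ring

/-- Passing from `f μ` to `(V f) ν` multiplies the Cauchy transform at `z` by a constant
independent of `f`. -/
lemma exists_cauchy_ratio {μ ν : Measure ℝ} [IsFiniteMeasure ν]
    (one : Lp ℂ 2 μ) (hone : (one : ℝ → ℂ) =ᵐ[μ] fun _ => 1)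
    (A : Lp ℂ 2 μ →L[ℂ] Lp ℂ 2 μ) (α : ℝ)
    (hA : ∀ g : Lp ℂ 2 μ, (A g : ℝ → ℂ) =ᵐ[μ] fun t => t * g t + (α : ℂ) * ⟪one, g⟫)
    (V : Lp ℂ 2 μ ≃ₗᵢ[ℂ] Lp ℂ 2 ν)
    (hV : ∀ g : Lp ℂ 2 μ, (V (A g) : ℝ → ℂ) =ᵐ[ν] fun t => t * (V g) t)
    (hV1 : (V one : ℝ → ℂ) =ᵐ[ν] fun _ => 1) {z : ℂ} (hz : z.im ≠ 0) :
    ∃ k : ℂ, ∀ f : Lp ℂ 2 μ, ∫ t, (V f : ℝ → ℂ) t * ((t : ℂ) - z)⁻¹ ∂ν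
      = k * ∫ t, (f : ℝ → ℂ) t * ((t : ℂ) - z)⁻¹ ∂μ := by
  set w := (starRingEnd ℂ) z with hw_def
  have hw : w.im ≠ 0 := by simpa [hw_def] using hz
  set h : Lp ℂ 2 ν := (memLp_cauchyKernel ν hw).toLp
  have hh : (h : ℝ → ℂ) =ᵐ[ν] fun t => ((t : ℂ) - w)⁻¹ := (memLp_cauchyKernel ν hw).coeFn_toLp
  set g := V.symm h
  have hVg : V g = h := V.apply_symm_apply h
  have hsolve : A g - w • g = one := by
    apply V.injective
    rw [map_sub, map_smul, hVg]
    apply Lp.ext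
    have hVAg := hV g
    rw [hVg] at hVAg
    filter_upwards [hVAg, hV1, hh, Lp.coeFn_sub (V (A g)) (w • h), Lp.coeFn_smul w h]
      with t h1 h2 h3 h4 h5
    rw [h4, Pi.sub_apply, h5, Pi.smul_apply, h1, h2, h3, smul_eq_mul, ← sub_mul]
    exact mul_inv_cancel₀ (ofReal_sub_ne_zero_of_im_ne_zero hw t)
  have hg : (g : ℝ → ℂ) =ᵐ[μ] fun t => (1 - α * ⟪one, g⟫) * ((t : ℂ) - w)⁻¹ := by
    have hcoe := Lp.coeFn_sub (A g) (w • g)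
    rw [hsolve] at hcoe
    filter_upwards [hcoe, hone, hA g, Lp.coeFn_smul w g] with t h1 h2 h3 h4
    rw [h2, Pi.sub_apply, h3, h4, Pi.smul_apply, smul_eq_mul] at h1
    rw [eq_mul_inv_iff_mul_eq₀ (ofReal_sub_ne_zero_of_im_ne_zero hw t), h1]
    ring
  refine ⟨(starRingEnd ℂ) (1 - α * ⟪one, g⟫), fun f => ?_⟩
  have hν := inner_eq_cauchy ν z 1 h (V f) (by simpa using hh)
  rw [map_one, one_mul] at hν
  rw [← hν, ← inner_eq_cauchy μ z _ g f hg, ← hVg, V.inner_map_map]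

/-- **Aronszajn–Krein-type formula, second identity.**
For every `f ∈ L²(μ)`, every `α ∈ ℝ` and nonreal `z`,
`𝒦_{f_α μ_α}(z)·𝒦_μ(z) = 𝒦_{fμ}(z)·𝒦_{μ_α}(z)`, i.e. the normalized Cauchy
transform `𝒦_{f_α μ_α}/𝒦_{μ_α}` is independent of `α`. -/
theorem aronszajn_krein_second_identity
{μ : Measure ℝ} [IsFiniteMeasure μ]
    (hsupp : ∃ K : Set ℝ, IsCompact K ∧ μ Kᶜ = 0)
    (one : Lp ℂ 2 μ) (hone : (one : ℝ → ℂ) =ᵐ[μ] fun _ => 1)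
    (A : ℝ → (Lp ℂ 2 μ →L[ℂ] Lp ℂ 2 μ))
    (hA : ∀ (α : ℝ) (g : Lp ℂ 2 μ),
      (A α g : ℝ → ℂ) =ᵐ[μ] fun t => t * g t + (α : ℂ) * ⟪one, g⟫)
    (μm : ℝ → Measure ℝ)
    (hμm_fin : ∀ α, IsFiniteMeasure (μm α))
    (hμm0 : μm 0 = μ)
    (hres : ∀ (α : ℝ) (z : ℂ), z.im ≠ 0 → ∀ g : Lp ℂ 2 μ,
      A α g - z • g = one → ⟪one, g⟫ = ∫ t, ((t : ℂ) - z)⁻¹ ∂(μm α))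
    (V : ∀ α : ℝ, Lp ℂ 2 μ ≃ₗᵢ[ℂ] Lp ℂ 2 (μm α))
    (hV : ∀ (α : ℝ) (g : Lp ℂ 2 μ),
      (V α (A α g) : ℝ → ℂ) =ᵐ[μm α] fun t => t * (V α g) t)
    (hV1 : ∀ α : ℝ, (V α one : ℝ → ℂ) =ᵐ[μm α] fun _ => 1)
    (f : Lp ℂ 2 μ) (α : ℝ) (z : ℂ) (hz : z.im ≠ 0) :
    (∫ t, (V α f : ℝ → ℂ) t * ((t : ℂ) - z)⁻¹ ∂(μm α)) *
        (∫ t, ((t : ℂ) - z)⁻¹ ∂μ)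
      = (∫ t, (f : ℝ → ℂ) t * ((t : ℂ) - z)⁻¹ ∂μ) *
        (∫ t, ((t : ℂ) - z)⁻¹ ∂(μm α)) := by
  have := hμm_fin α
  obtain ⟨k, hk⟩ := exists_cauchy_ratio one hone (A α) α (hA α) (V α) (hV α) (hV1 α) hz
  have h1 : ∫ t, ((t : ℂ) - z)⁻¹ ∂(μm α) = k * ∫ t, ((t : ℂ) - z)⁻¹ ∂μ := by
    have hk1 := hk one
    rw [integral_congr_ae (g := fun t : ℝ => ((t : ℂ) - z)⁻¹)
        ((hV1 α).mono fun t ht => by simp [ht]),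
      integral_congr_ae (g := fun t : ℝ => ((t : ℂ) - z)⁻¹)
        (hone.mono fun t ht => by simp [ht])] at hk1
    exact hk1
  rw [hk f, h1]
  ring
end
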